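/- Let m₀, m₁, m₂ be nonnegative integers with m₀ < m₁ < m₂. For all real parameters a₀, a₁, a₂, b₀, b₁, b₂, the Abel equation x' = (a₀t^{m₀} + a₁t^{m₁} + a₂t^{m₂})x³ + (b₀t^{m₀} + b₁t^{m₁} + b₂t^{m₂})x², t ∈ [0,1], has at most three limit cycles, where the trivial solution x = 0 is counted among them when it is isolated. -/

import Mathlib

/-!
Write `u = 1 / x` for a closed solution with `x 0 ≠ 0`; it satisfies `u' = -(A / u + B)`, and the
difference of two such functions solves a linear homogeneous equation, so their order and their
signs persist.

**Independent coefficients.** If `A` and `B` are linearly independent, there are not even three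
distinct nonzero closed solutions. The only property of `A` and of the combinations `k A + B` that
is used is that a nonzero trinomial never takes weakly alternating signs at four points of `(0, 1)`
(`NoAlt`, `noAlt_trinomial`). Suppose `u > v > w` come from three closed solutions, with `v > 0`
after the reflection `x ↦ -x`. The gap `δ = u - w` is closed, with `δ' = A δ / (u w)`. After a
rotation of the time circle (`Loop.rotate`), `A w` is negative on `(0, s)` and positive on `(s, 1)`,
so `δ` decreases from `β` to `α` and then increases back to `β`, and it serves as a new independent
variable on each of the two branches. With `φ = -B / A`, each of `u`, `v`, `w` satisfies
`df/dδ = (φ - 1 / f) u w / δ` on each branch (`Loop.arc_of_branch`). By `NoAlt` for `k A + B` with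
`k` a value of `φ`, the difference of the two branch values of `φ` changes sign at most once
(`Loop.no_triple`). Since `d(log |w / u|)/dδ = φ - (u / w - w / u) / δ` and the two branches agree
at `α` and `β`, `log |w / u|` is larger along one branch on the whole of `(α, β)`
(`log_compare`); as `u - w = δ` is the same on both, the functions `w` of the two branches are
ordered. The ratio `R = (u - v) / δ` satisfies `dR/dδ = -R (1 - R) / v`, where
`v = δ + w - R δ`, so this order makes `R` strictly larger along one branch at `δ = β`
(`ratio_compare`), contradicting that the branches agree there.

**Dependent coefficients.** If `A = a C` and `B = b C` with `(a, b) ≠ 0`, the equation separates: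
`x' = C(t) V(x)` with `V(x) = a x³ + b x²`. A closed solution with `V (x 0) ≠ 0` is embedded in a
continuum of closed solutions `H (G x + κ)`, where `G' = 1 / V` and `H = G⁻¹`
(`exists_nearby_pos`), so it is not isolated. Hence the nonzero limit cycles start at the
root of `a x + b`, of which there is at most one.
-/

open Set intervalIntegral

noncomputable section

/-- `x` is a solution of the Abel equation `x' = A(t) x^3 + B(t) x^2` on `[0,T]`. -/
def AbelSol (A B : ℝ → ℝ) (T : ℝ) (x : ℝ → ℝ) : Prop :=
  ∀ t ∈ Set.Icc (0:ℝ) T,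
    HasDerivWithinAt x (A t * x t ^ 3 + B t * x t ^ 2) (Set.Icc (0:ℝ) T) t

/-- A closed solution of the Abel equation on `[0,T]`. -/
def ClosedSol (A B : ℝ → ℝ) (T : ℝ) (x : ℝ → ℝ) : Prop :=
  AbelSol A B T x ∧ x 0 = x T

/-- A limit cycle: an isolated closed solution (isolated among initial values of
closed solutions). -/
def LimitCycle (A B : ℝ → ℝ) (T : ℝ) (x : ℝ → ℝ) : Prop :=
  ClosedSol A B T x ∧
    ∃ ε > (0:ℝ), ∀ y : ℝ → ℝ, ClosedSol A B T y → |y 0 - x 0| < ε → y 0 = x 0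

/-- The set of initial values of limit cycles of the Abel equation. -/
def LCInits (A B : ℝ → ℝ) (T : ℝ) : Set ℝ :=
  {v | ∃ x : ℝ → ℝ, LimitCycle A B T x ∧ x 0 = v}

/-- `g` has a zero of multiplicity at least `m` at `t` (derivatives taken within `E`). -/
def ZeroOrderGe (E : Set ℝ) (g : ℝ → ℝ) (t : ℝ) (m : ℕ) : Prop :=
  ∀ k < m, iteratedDerivWithin k g E t = 0

/-- `g` has at most `n` zeros on `E`, counted with multiplicities. -/
def AtMostZerosOn (E : Set ℝ) (g : ℝ → ℝ) (n : ℕ) : Prop :=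
  ∀ (S : Finset ℝ) (m : ℝ → ℕ),
    (∀ t ∈ S, t ∈ E ∧ 1 ≤ m t ∧ ZeroOrderGe E g t (m t)) →
      (∑ t ∈ S, m t) ≤ n

/-- `{f₀, f₁, f₂}` is an ET-system on `E`: linearly independent on `E`, and every
nontrivial linear combination has at most two zeros on `E` counted with multiplicities. -/
def IsETSystem3 (E : Set ℝ) (f₀ f₁ f₂ : ℝ → ℝ) : Prop :=
  (∀ a b c : ℝ, (∀ t ∈ E, a * f₀ t + b * f₁ t + c * f₂ t = 0) → a = 0 ∧ b = 0 ∧ c = 0) ∧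
  ∀ a b c : ℝ, ¬(a = 0 ∧ b = 0 ∧ c = 0) →
    AtMostZerosOn E (fun t => a * f₀ t + b * f₁ t + c * f₂ t) 2

/-- `{A, B}` is an ET-system with accuracy one on `E`: linearly independent on `E`, and
every nontrivial linear combination has at most two zeros on `E` counted with
multiplicities. -/
def IsETAcc1 (E : Set ℝ) (A B : ℝ → ℝ) : Prop :=
  (∀ l m : ℝ, (∀ t ∈ E, l * A t + m * B t = 0) → l = 0 ∧ m = 0) ∧
  ∀ l m : ℝ, ¬(l = 0 ∧ m = 0) → AtMostZerosOn E (fun t => l * A t + m * B t) 2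

/-- `P` is a Poincaré (time-`T`) map of the Abel equation on the set `U` of initial
values. -/
def IsPoincareOn (A B : ℝ → ℝ) (T : ℝ) (P : ℝ → ℝ) (U : Set ℝ) : Prop :=
  ∀ y ∈ U, ∃ z : ℝ → ℝ, AbelSol A B T z ∧ z 0 = y ∧ z T = P y

/-! ### Calculus with an exceptional point -/

lemma lt_of_deriv_pos {F : ℝ → ℝ} {a b : ℝ} (hab : a < b) (hF : ContinuousOn F (Icc a b))
    (h : ∀ x ∈ Ioo a b, ∃ F', 0 < F' ∧ HasDerivAt F F' x) : F a < F b := by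
  have hm : StrictMonoOn F (Icc a b) := by
    refine strictMonoOn_of_deriv_pos (convex_Icc a b) hF fun x hx => ?_
    rw [interior_Icc] at hx
    obtain ⟨F', h0, h1⟩ := h x hx
    rwa [h1.deriv]
  exact hm ⟨le_rfl, hab.le⟩ ⟨hab.le, le_rfl⟩ hab

/-- Strict monotonicity from a positive derivative that may fail to exist at one point `c`. -/
lemma lt_of_deriv_pos_off {F : ℝ → ℝ} {a b : ℝ} (c : ℝ) (hab : a < b)
    (hF : ContinuousOn F (Icc a b))
    (h : ∀ x ∈ Ioo a b, x ≠ c → ∃ F', 0 < F' ∧ HasDerivAt F F' x) : F a < F b := by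
  by_cases hc : c ∈ Ioo a b
  · have h1 : F a < F c := lt_of_deriv_pos hc.1 (hF.mono (Icc_subset_Icc le_rfl hc.2.le))
      fun x hx => h x ⟨hx.1, hx.2.trans hc.2⟩ hx.2.ne
    have h2 : F c < F b := lt_of_deriv_pos hc.2 (hF.mono (Icc_subset_Icc hc.1.le le_rfl))
      fun x hx => h x ⟨hc.1.trans hx.1, hx.2⟩ hx.1.ne'
    exact h1.trans h2
  · exact lt_of_deriv_pos hab hF fun x hx => h x hx fun e => hc (e ▸ hx)

/-- A Gronwall-type comparison: a function that starts nonnegative and satisfies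
`F' > -K |F|` away from `c` is positive afterwards. -/
lemma pos_of_deriv_gt {F : ℝ → ℝ} {a b : ℝ} (c K : ℝ) (hF : ContinuousOn F (Icc a b))
    (ha : 0 ≤ F a)
    (h : ∀ x ∈ Ioo a b, x ≠ c → ∃ F', -(K * |F x|) < F' ∧ HasDerivAt F F' x) :
    ∀ x ∈ Ioc a b, 0 < F x := by
  have step : ∀ (L p y : ℝ), a ≤ p → p < y → y ≤ b → 0 ≤ F p →
      (∀ x ∈ Ioo p y, L * F x ≤ -(K * |F x|)) → 0 < F y := by
    intro L p y hpa hpy hyb hFp hL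
    set G : ℝ → ℝ := fun x => F x * Real.exp (-L * x) with hG
    have key : G p < G y := by
      refine lt_of_deriv_pos_off c hpy ?_ ?_
      · exact (hF.mono (Icc_subset_Icc hpa hyb)).mul (by fun_prop)
      · intro x hx hxc
        obtain ⟨F', h1, h2⟩ := h x ⟨hpa.trans_lt hx.1, hx.2.trans_le hyb⟩ hxc
        refine ⟨_, ?_, h2.mul (((hasDerivAt_id x).const_mul (-L)).exp)⟩
        have := Real.exp_pos (-L * x)
        simp only [id]
        nlinarith [mul_pos (sub_pos.2 ((hL x hx).trans_lt h1)) this]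
    have h1 : 0 ≤ G p := mul_nonneg hFp (Real.exp_pos _).le
    exact pos_of_mul_pos_left (h1.trans_lt key) (Real.exp_pos _).le
  have nonneg : ∀ y ∈ Icc a b, 0 ≤ F y := by
    intro y hy
    by_contra! hy0
    have hcomp : IsCompact (Icc a y ∩ F ⁻¹' Ici 0) :=
      isCompact_Icc.of_isClosed_subset
        ((hF.mono (Icc_subset_Icc le_rfl hy.2)).preimage_isClosed_of_isClosed isClosed_Icc
          isClosed_Ici) inter_subset_left
    obtain ⟨p, ⟨hp, hFp⟩, hmax⟩ := hcomp.exists_isGreatest ⟨a, ⟨le_rfl, hy.1⟩, ha⟩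
    have hpy : p < y := lt_of_le_of_ne hp.2 fun e => by
      rw [e] at hFp; exact absurd hFp (not_le.2 hy0)
    refine absurd (step K p y hp.1 hpy hy.2 hFp fun x hx => ?_) (not_lt.2 hy0.le)
    have : F x < 0 := by
      by_contra! hx0
      exact absurd (hmax ⟨⟨hp.1.trans hx.1.le, hx.2.le⟩, hx0⟩) (not_le.2 hx.1)
    rw [abs_of_neg this]; linarith
  intro y hy
  refine step (-K) a y le_rfl hy.1 hy.2 ha fun x hx => ?_
  rw [abs_of_nonneg (nonneg x ⟨hx.1.le, hx.2.le.trans hy.2⟩)]; linarith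

/-- The time-reversed form of `pos_of_deriv_gt`. -/
lemma pos_of_deriv_lt {F : ℝ → ℝ} {a b : ℝ} (c K : ℝ) (hF : ContinuousOn F (Icc a b))
    (hb : 0 ≤ F b)
    (h : ∀ x ∈ Ioo a b, x ≠ c → ∃ F', F' < K * |F x| ∧ HasDerivAt F F' x) :
    ∀ x ∈ Ico a b, 0 < F x := by
  intro x hx
  have := pos_of_deriv_gt (F := fun x => F (-x)) (a := -b) (b := -a) (-c) K
    (hF.comp continuousOn_neg fun y hy => ⟨by linarith [hy.2], by linarith [hy.1]⟩)
    (by simpa using hb) (fun y hy hyc => by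
      obtain ⟨F', h1, h2⟩ := h (-y) ⟨by linarith [hy.2], by linarith [hy.1]⟩
        (fun e => hyc (by linarith))
      exact ⟨-F', by linarith, by
        simpa [Function.comp_def] using h2.comp y (hasDerivAt_neg y)⟩) (-x)
      ⟨by linarith [hx.2], by linarith [hx.1]⟩
  simpa using this

/-- Inverse of a continuous function on `[a, b]` with positive derivative away from `c`, together
with its derivative. -/
lemma exists_inverse {D D' : ℝ → ℝ} {a b : ℝ} (c : ℝ) (hab : a < b) (hD : ContinuousOn D (Icc a b))
    (h : ∀ x ∈ Ioo a b, x ≠ c → 0 < D' x ∧ HasDerivAt D (D' x) x) :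
    ∃ τ : ℝ → ℝ, ContinuousOn τ (Icc (D a) (D b)) ∧ StrictMonoOn τ (Icc (D a) (D b)) ∧
      (∀ x ∈ Icc a b, τ (D x) = x) ∧
      (∀ y ∈ Icc (D a) (D b), τ y ∈ Icc a b ∧ D (τ y) = y) ∧
      (∀ y ∈ Ioo (D a) (D b), τ y ∈ Ioo a b) ∧
      (∀ y ∈ Ioo (D a) (D b), τ y ≠ c → HasDerivAt τ (D' (τ y))⁻¹ y) := by
  have hm : StrictMonoOn D (Icc a b) := by
    intro x hx y hy hxy
    exact lt_of_deriv_pos_off c hxy (hD.mono (Icc_subset_Icc hx.1 hy.2)) fun z hz hzc =>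
      ⟨D' z, h z ⟨hx.1.trans_lt hz.1, hz.2.trans_le hy.2⟩ hzc⟩
  have hsurj : D '' Icc a b = Icc (D a) (D b) := by
    apply Subset.antisymm
    · rintro _ ⟨x, hx, rfl⟩
      exact ⟨hm.monotoneOn ⟨le_rfl, hab.le⟩ hx hx.1, hm.monotoneOn hx ⟨hab.le, le_rfl⟩ hx.2⟩
    · exact intermediate_value_Icc hab.le hD
  have hex : ∀ y, ∃ x, y ∈ Icc (D a) (D b) → x ∈ Icc a b ∧ D x = y := by
    intro y
    by_cases hy : y ∈ Icc (D a) (D b)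
    · obtain ⟨x, hx, hxy⟩ := hsurj.symm ▸ hy
      exact ⟨x, fun _ => ⟨hx, hxy⟩⟩
    · exact ⟨0, fun h => absurd h hy⟩
  choose τ hτ using hex
  have hτm : StrictMonoOn τ (Icc (D a) (D b)) := by
    intro y hy z hz hyz
    rw [← hm.lt_iff_lt (hτ y hy).1 (hτ z hz).1, (hτ y hy).2, (hτ z hz).2]
    exact hyz
  have hleft : ∀ x ∈ Icc a b, τ (D x) = x := fun x hx => by
    have hy : D x ∈ Icc (D a) (D b) := hsurj ▸ mem_image_of_mem D hx
    exact hm.injOn (hτ _ hy).1 hx (hτ _ hy).2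
  have hcont : ContinuousOn τ (Icc (D a) (D b)) := by
    rw [continuousOn_iff_isClosed]
    intro K hK
    refine ⟨D '' (Icc a b ∩ K), ?_, ?_⟩
    · exact ((isCompact_Icc.inter_right hK).image_of_continuousOn
        (hD.mono inter_subset_left)).isClosed
    · ext y
      constructor
      · rintro ⟨h1, h2⟩
        exact ⟨⟨τ y, ⟨(hτ y h2).1, h1⟩, (hτ y h2).2⟩, h2⟩
      · rintro ⟨⟨x, hx, rfl⟩, h2⟩
        refine ⟨?_, h2⟩
        rw [mem_preimage, hleft x hx.1]
        exact hx.2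
  have hIoo : ∀ y ∈ Ioo (D a) (D b), τ y ∈ Ioo a b := by
    intro y hy
    have h1 := hτ y (Ioo_subset_Icc_self hy)
    refine ⟨lt_of_le_of_ne h1.1.1 fun e => ?_, lt_of_le_of_ne h1.1.2 fun e => ?_⟩
    · rw [← e] at h1; exact hy.1.ne h1.2
    · rw [e] at h1; exact hy.2.ne' h1.2
  refine ⟨τ, hcont, hτm, hleft, hτ, hIoo, fun y hy hyc => ?_⟩
  obtain ⟨h1, h2⟩ := h _ (hIoo y hy) hyc
  refine HasDerivAt.of_local_left_inverse
    (hcont.continuousAt (Icc_mem_nhds hy.1 hy.2)) h2 h1.ne' ?_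
  filter_upwards [Icc_mem_nhds hy.1 hy.2] with z hz using (hτ z hz).2

/-! ### Comparison of two branches -/

/-- One branch of the loop formed by three solutions, parametrized by the gap `y = u y - w y`. The
function `φ` is `-B / A` along the branch, and `c` is a gap value at which differentiability is not
required. -/
structure Arc (α β c : ℝ) (φ u v w : ℝ → ℝ) : Prop where
  cu : ContinuousOn u (Icc α β)
  cv : ContinuousOn v (Icc α β)
  cw : ContinuousOn w (Icc α β)
  diff : ∀ y ∈ Icc α β, u y - w y = y
  vu : ∀ y ∈ Icc α β, v y < u y
  wv : ∀ y ∈ Icc α β, w y < v y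
  vpos : ∀ y ∈ Icc α β, 0 < v y
  wne : ∀ y ∈ Icc α β, w y ≠ 0
  du : ∀ y ∈ Ioo α β, y ≠ c → HasDerivAt u ((φ y - 1 / u y) * (u y * w y) / y) y
  dv : ∀ y ∈ Ioo α β, y ≠ c → HasDerivAt v ((φ y - 1 / v y) * (u y * w y) / y) y
  dw : ∀ y ∈ Ioo α β, y ≠ c → HasDerivAt w ((φ y - 1 / w y) * (u y * w y) / y) y

namespace Arc

variable {α β c : ℝ} {φ u v w : ℝ → ℝ}

lemma upos (h : Arc α β c φ u v w) {y : ℝ} (hy : y ∈ Icc α β) : 0 < u y :=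
  (h.vpos y hy).trans (h.vu y hy)

lemma hasDerivAt_log (h : Arc α β c φ u v w) (hα : 0 < α) {y : ℝ} (hy : y ∈ Ioo α β)
    (hc : y ≠ c) :
    HasDerivAt (fun y => Real.log (w y) - Real.log (u y))
      (φ y - (u y / w y - w y / u y) / y) y := by
  have hy' := Ioo_subset_Icc_self hy
  have hu := (h.upos hy').ne'
  have hw := h.wne y hy'
  have hy0 : y ≠ 0 := (hα.trans hy.1).ne'
  have hd := h.diff y hy'
  refine (((h.dw y hy hc).log hw).sub ((h.du y hy hc).log hu)).congr_deriv ?_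
  have : w y = u y - y := by linarith
  field_simp
  rw [this]
  ring

lemma hasDerivAt_ratio (h : Arc α β c φ u v w) (hα : 0 < α) {y : ℝ} (hy : y ∈ Ioo α β)
    (hc : y ≠ c) :
    HasDerivAt (fun y => (u y - v y) / y)
      (-((u y - v y) / y * (1 - (u y - v y) / y) / v y)) y := by
  have hy' := Ioo_subset_Icc_self hy
  have hu := (h.upos hy').ne'
  have hv := (h.vpos y hy').ne'
  have hw := h.wne y hy'
  have hy0 : y ≠ 0 := (hα.trans hy.1).ne'
  have hd := h.diff y hy'
  refine (((h.du y hy hc).sub (h.dv y hy hc)).fun_div (hasDerivAt_id y) hy0).congr_deriv ?_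
  have : w y = u y - y := by linarith
  simp only [id, Pi.sub_apply]
  field_simp
  rw [this]
  ring

end Arc

/-- On `(0, M]` the exponential is `M`-Lipschitz as a function of the logarithm. -/
lemma abs_sub_le_log {r s M : ℝ} (hr : 0 < r) (hs : 0 < s) (hrM : r ≤ M) (hsM : s ≤ M) :
    |r - s| ≤ M * |Real.log r - Real.log s| := by
  have aux : ∀ {r s : ℝ}, 0 < r → 0 < s → r ≤ M → s ≤ M → r - s ≤ M * |Real.log r - Real.log s| := by
    intro r s hr hs hrM hsM
    rcases le_total r s with h | h
    · have := mul_nonneg (hr.le.trans hrM) (abs_nonneg (Real.log r - Real.log s)); linarith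
    have h1 := Real.log_le_sub_one_of_pos (div_pos hs hr)
    rw [Real.log_div hs.ne' hr.ne'] at h1
    have h2 : r * (Real.log s - Real.log r) ≤ s - r := by
      calc _ ≤ r * (s / r - 1) := mul_le_mul_of_nonneg_left h1 hr.le
        _ = s - r := by field_simp
    have h3 : r * |Real.log r - Real.log s| ≤ M * |Real.log r - Real.log s| :=
      mul_le_mul_of_nonneg_right hrM (abs_nonneg _)
    have h4 := mul_le_mul_of_nonneg_left (le_abs_self (Real.log r - Real.log s)) hr.le
    linarith
  rw [abs_le]
  constructor
  · have := aux hs hr hsM hrM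
    rw [abs_sub_comm] at this; linarith
  · exact aux hr hs hrM hsM

/-- The function `z⁻¹ - z` is Lipschitz in `log |z|` for `z` of fixed sign bounded away from `0` and
from infinity. -/
lemma abs_inv_sub_le_log {z z' M : ℝ} (h : 0 < z * z') (h1 : |z| ≤ M) (h2 : |z'| ≤ M)
    (h3 : |z⁻¹| ≤ M) (h4 : |z'⁻¹| ≤ M) :
    |(z⁻¹ - z) - (z'⁻¹ - z')| ≤ 2 * M * |Real.log z - Real.log z'| := by
  have hz : z ≠ 0 := by rintro rfl; simp at h
  have hz' : z' ≠ 0 := by rintro rfl; simp at h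
  have e1 := abs_sub_le_log (abs_pos.2 hz) (abs_pos.2 hz') h1 h2
  have e2 := abs_sub_le_log (abs_pos.2 (inv_ne_zero hz)) (abs_pos.2 (inv_ne_zero hz')) h3 h4
  simp only [Real.log_abs, Real.log_inv] at e1 e2
  have e3 : |-Real.log z - -Real.log z'| = |Real.log z - Real.log z'| := by
    rw [← abs_neg]; ring_nf
  rw [e3] at e2
  have key : |(z⁻¹ - z) - (z'⁻¹ - z')| ≤ |(|z⁻¹| - |z'⁻¹|)| + |(|z| - |z'|)| := by
    have t : |(z⁻¹ - z) - (z'⁻¹ - z')| ≤ |z⁻¹ - z'⁻¹| + |z - z'| := by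
      calc _ = |(z⁻¹ - z'⁻¹) - (z - z')| := by ring_nf
        _ ≤ _ := abs_sub _ _
    rcases pos_and_pos_or_neg_and_neg_of_mul_pos h with ⟨p, p'⟩ | ⟨p, p'⟩
    · rw [abs_of_pos p, abs_of_pos p', abs_of_pos (inv_pos.2 p), abs_of_pos (inv_pos.2 p')]
      exact t
    · rw [abs_of_neg p, abs_of_neg p', abs_of_neg (inv_lt_zero.2 p), abs_of_neg (inv_lt_zero.2 p')]
      have e5 : |-z⁻¹ - -z'⁻¹| = |z⁻¹ - z'⁻¹| := by rw [← abs_neg]; ring_nf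
      have e6 : |-z - -z'| = |z - z'| := by rw [← abs_neg]; ring_nf
      rw [e5, e6]; exact t
  linarith

section compare

variable {α β c e : ℝ} {φp φm up vp wp um vm wm : ℝ → ℝ}

/-- If `φp - φm` is positive before `m` and negative after it, then `log |w / u|` is larger along
the first branch on the whole open interval: compare forwards from `α` up to `m` and backwards from
`β` down to `m`. The number `e` records the common sign of the two functions `w`. Recall that
`Real.log` is the logarithm of the absolute value. -/
lemma log_compare (hα : 0 < α) (hαβ : α < β) (P : Arc α β c φp up vp wp)
    (M : Arc α β c φm um vm wm)
    (hep : ∀ y ∈ Icc α β, 0 < e * wp y) (hem : ∀ y ∈ Icc α β, 0 < e * wm y)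
    (h0 : wp α = wm α) (h1 : wp β = wm β) {m : ℝ} (hm : m ∈ Icc α β)
    (hl : ∀ y ∈ Ioo α m, y ≠ c → φm y < φp y) (hr : ∀ y ∈ Ioo m β, y ≠ c → φp y < φm y) :
    ∀ y ∈ Ioo α β, 0 < (Real.log (wp y) - Real.log (up y)) - (Real.log (wm y) - Real.log (um y)) := by
  have hα' : α ∈ Icc α β := ⟨le_rfl, hαβ.le⟩
  have hβ' : β ∈ Icc α β := ⟨hαβ.le, le_rfl⟩
  set f : ℝ → ℝ := fun y =>
    (Real.log (wp y) - Real.log (up y)) - (Real.log (wm y) - Real.log (um y)) with hf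
  have e0 : up α = um α := by linarith [P.diff α hα', M.diff α hα']
  have e1 : up β = um β := by linarith [P.diff β hβ', M.diff β hβ']
  have f0 : f α = 0 := by simp [hf, e0, h0]
  have f1 : f β = 0 := by simp [hf, e1, h1]
  have hcf : ContinuousOn f (Icc α β) :=
    ((P.cw.log P.wne).sub (P.cu.log fun y hy => (P.upos hy).ne')).sub
      ((M.cw.log M.wne).sub (M.cu.log fun y hy => (M.upos hy).ne'))
  have bdd : ∀ {g : ℝ → ℝ}, ContinuousOn g (Icc α β) → ∃ C, ∀ y ∈ Icc α β, |g y| ≤ C :=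
    fun hg => isCompact_Icc.exists_bound_of_continuousOn hg
  have czp := P.cw.div P.cu fun y hy => (P.upos hy).ne'
  have czm := M.cw.div M.cu fun y hy => (M.upos hy).ne'
  obtain ⟨C1, hC1⟩ := bdd czp
  obtain ⟨C2, hC2⟩ := bdd czm
  obtain ⟨C3, hC3⟩ := bdd (czp.inv₀ fun y hy => div_ne_zero (P.wne y hy) (P.upos hy).ne')
  obtain ⟨C4, hC4⟩ := bdd (czm.inv₀ fun y hy => div_ne_zero (M.wne y hy) (M.upos hy).ne')
  set C := max (max C1 C2) (max C3 C4) with hC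
  have hCC : C1 ≤ C ∧ C2 ≤ C ∧ C3 ≤ C ∧ C4 ≤ C := by simp [hC]
  have deriv : ∀ y ∈ Ioo α β, y ≠ c → ∃ η, |η| ≤ 2 * C / α * |f y| ∧
      HasDerivAt f (φp y - φm y + η) y := by
    intro y hy hyc
    have hy' := Ioo_subset_Icc_self hy
    have hy0 : 0 < y := hα.trans hy.1
    refine ⟨-(((up y / wp y - wp y / up y) - (um y / wm y - wm y / um y)) / y), ?_, ?_⟩
    · have hsgn : 0 < wp y / up y * (wm y / um y) := by
        have a1 := hep y hy'
        have a2 := hem y hy'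
        have a3 : 0 < wp y * wm y := by
          rcases lt_trichotomy e 0 with h | h | h
          · exact mul_pos_of_neg_of_neg (neg_of_mul_pos_right a1 h.le)
              (neg_of_mul_pos_right a2 h.le)
          · simp [h] at a1
          · exact mul_pos (pos_of_mul_pos_right a1 h.le) (pos_of_mul_pos_right a2 h.le)
        have a4 := P.upos hy'
        have a5 := M.upos hy'
        rw [div_mul_div_comm]
        positivity
      have := abs_inv_sub_le_log hsgn ((hC1 y hy').trans hCC.1) ((hC2 y hy').trans hCC.2.1)
        ((hC3 y hy').trans hCC.2.2.1) ((hC4 y hy').trans hCC.2.2.2)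
      rw [Real.log_div (P.wne y hy') (P.upos hy').ne',
        Real.log_div (M.wne y hy') (M.upos hy').ne', inv_div, inv_div] at this
      rw [abs_neg, abs_div, abs_of_pos hy0, div_le_iff₀ hy0]
      refine this.trans ?_
      have hCnn : 0 ≤ C := (abs_nonneg _).trans ((hC1 y hy').trans hCC.1)
      have : 2 * C ≤ 2 * C / α * y := by
        rw [div_mul_eq_mul_div, le_div_iff₀ hα]
        exact mul_le_mul_of_nonneg_left hy.1.le (by positivity)
      calc _ ≤ 2 * C / α * y * |f y| := mul_le_mul_of_nonneg_right this (abs_nonneg _)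
        _ = _ := by ring
    · refine ((P.hasDerivAt_log hα hy hyc).sub (M.hasDerivAt_log hα hy hyc)).congr_deriv ?_
      ring
  have fwd := pos_of_deriv_gt (F := f) (a := α) (b := m) c (2 * C / α)
    (hcf.mono (Icc_subset_Icc le_rfl hm.2)) f0.ge fun y hy hyc => by
      obtain ⟨η, h2, h3⟩ := deriv y ⟨hy.1, hy.2.trans_le hm.2⟩ hyc
      exact ⟨_, by linarith [hl y hy hyc, (abs_le.1 h2).1], h3⟩
  have bwd := pos_of_deriv_lt (F := f) (a := m) (b := β) c (2 * C / α)
    (hcf.mono (Icc_subset_Icc hm.1 le_rfl)) f1.ge fun y hy hyc => by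
      obtain ⟨η, h2, h3⟩ := deriv y ⟨hm.1.trans_lt hy.1, hy.2⟩ hyc
      exact ⟨_, by linarith [hr y hy hyc, (abs_le.1 h2).2], h3⟩
  intro y hy
  rcases le_total y m with h | h
  · exact fwd y ⟨hy.1, h⟩
  · exact bwd y ⟨h, hy.2⟩

/-- Two branches with the same endpoints cannot have strictly ordered functions `w`: the ratio
`(u - v) / y` would be strictly larger at `β` along the branch with the larger `w`. -/
lemma ratio_compare (hα : 0 < α) (hαβ : α < β) (P : Arc α β c φp up vp wp)
    (M : Arc α β c φm um vm wm) (h0 : up α = um α) (h1 : up β = um β)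
    (hv0 : vp α = vm α) (hv1 : vp β = vm β) (h : ∀ y ∈ Ioo α β, wm y < wp y) : False := by
  set f : ℝ → ℝ := fun y => (up y - vp y) / y - (um y - vm y) / y with hf
  have f0 : f α = 0 := by simp [hf, h0, hv0]
  have f1 : f β = 0 := by simp [hf, h1, hv1]
  have hid : ContinuousOn (fun y : ℝ => y) (Icc α β) := continuousOn_id
  have hcf : ContinuousOn f (Icc α β) :=
    ((P.cu.sub P.cv).div hid fun y hy => (hα.trans_le hy.1).ne').sub
      ((M.cu.sub M.cv).div hid fun y hy => (hα.trans_le hy.1).ne')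
  have bdd : ∀ {g : ℝ → ℝ}, ContinuousOn g (Icc α β) → ∃ C, ∀ y ∈ Icc α β, |g y| ≤ C :=
    fun hg => isCompact_Icc.exists_bound_of_continuousOn hg
  obtain ⟨C1, hC1⟩ := bdd (P.cv.inv₀ fun y hy => (P.vpos y hy).ne')
  obtain ⟨C2, hC2⟩ := bdd (M.cv.inv₀ fun y hy => (M.vpos y hy).ne')
  have hCC : 0 ≤ C1 ∧ 0 ≤ C2 := ⟨(abs_nonneg _).trans (hC1 α ⟨le_rfl, hαβ.le⟩),
    (abs_nonneg _).trans (hC2 α ⟨le_rfl, hαβ.le⟩)⟩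
  have := pos_of_deriv_gt (F := f) (a := α) (b := β) c (β * C1 * C2 + C1) hcf f0.ge
    (fun y hy hyc => ?_) β ⟨hαβ, le_rfl⟩
  · linarith
  refine ⟨_, ?_, (P.hasDerivAt_ratio hα hy hyc).sub (M.hasDerivAt_ratio hα hy hyc)⟩
  have hy' := Ioo_subset_Icc_self hy
  have hy0 : 0 < y := hα.trans hy.1
  have hfy : f y = (up y - vp y) / y - (um y - vm y) / y := rfl
  set r := (up y - vp y) / y with hr
  set s := (um y - vm y) / y with hs
  have hP := P.vpos y hy'
  have hM := M.vpos y hy'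
  have ip : (vp y)⁻¹ ≤ C1 := (le_abs_self _).trans (hC1 y hy')
  have im : (vm y)⁻¹ ≤ C2 := (le_abs_self _).trans (hC2 y hy')
  have ipp := inv_pos.2 hP
  have imp := inv_pos.2 hM
  have r0 : 0 < r := div_pos (by linarith [P.vu y hy']) hy0
  have s0 : 0 < s := div_pos (by linarith [M.vu y hy']) hy0
  have r1 : r < 1 := by
    rw [hr, div_lt_one hy0]; linarith [P.wv y hy', P.diff y hy']
  have s1 : s < 1 := by
    rw [hs, div_lt_one hy0]; linarith [M.wv y hy', M.diff y hy']
  have ry : r * y = up y - vp y := div_mul_cancel₀ _ hy0.ne'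
  have sy : s * y = um y - vm y := div_mul_cancel₀ _ hy0.ne.symm
  -- The difference of the derivatives splits into a part caused by `vp y - vm y`, whose sign is
  -- controlled up to a multiple of `f y`, and a part proportional to `r - s = f y`.
  have split : -(r * (1 - r) / vp y) - -(s * (1 - s) / vm y) =
      s * (1 - s) * (vp y - vm y) * ((vp y)⁻¹ * (vm y)⁻¹) - (r - s) * (1 - r - s) * (vp y)⁻¹ := by
    field_simp
    ring
  have hv : -(β * |f y|) < vp y - vm y := by
    have a1 : vp y - vm y = (up y - um y) - (r - s) * y := by linarith
    have a2 : 0 < up y - um y := by linarith [P.diff y hy', M.diff y hy', h y hy]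
    have a3 : (r - s) * y ≤ |f y| * β := by
      rw [hfy]
      exact (mul_le_mul_of_nonneg_right (le_abs_self _) hy0.le).trans
        (mul_le_mul_of_nonneg_left hy.2.le (abs_nonneg _))
    linarith
  have hq : 0 < s * (1 - s) * ((vp y)⁻¹ * (vm y)⁻¹) :=
    mul_pos (mul_pos s0 (by linarith)) (mul_pos ipp imp)
  have hq1 : s * (1 - s) * ((vp y)⁻¹ * (vm y)⁻¹) ≤ C1 * C2 := by
    have : s * (1 - s) ≤ 1 := by nlinarith
    calc _ ≤ 1 * ((vp y)⁻¹ * (vm y)⁻¹) :=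
          mul_le_mul_of_nonneg_right this (mul_pos ipp imp).le
      _ ≤ C1 * C2 := by rw [one_mul]; exact mul_le_mul ip im imp.le hCC.1
  have t1 : -(β * C1 * C2 * |f y|) < s * (1 - s) * (vp y - vm y) * ((vp y)⁻¹ * (vm y)⁻¹) := by
    have b1 := mul_lt_mul_of_pos_left hv hq
    have b2 : s * (1 - s) * ((vp y)⁻¹ * (vm y)⁻¹) * (β * |f y|) ≤ C1 * C2 * (β * |f y|) :=
      mul_le_mul_of_nonneg_right hq1 (mul_nonneg (hα.trans hαβ).le (abs_nonneg _))
    linarith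
  have t2 : (r - s) * (1 - r - s) * (vp y)⁻¹ ≤ C1 * |f y| := by
    have b1 : (r - s) * (1 - r - s) ≤ |f y| := by
      rw [hfy]
      calc _ ≤ |(r - s) * (1 - r - s)| := le_abs_self _
        _ = |r - s| * |1 - r - s| := abs_mul _ _
        _ ≤ |r - s| * 1 := mul_le_mul_of_nonneg_left
            (abs_le.2 ⟨by linarith, by linarith⟩) (abs_nonneg _)
        _ = _ := mul_one _
    calc _ ≤ |f y| * (vp y)⁻¹ := mul_le_mul_of_nonneg_right b1 ipp.le
      _ ≤ |f y| * C1 := mul_le_mul_of_nonneg_left ip (abs_nonneg _)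
      _ = _ := mul_comm _ _
  rw [split]
  linarith

/-- Two branches with the same endpoints cannot have a difference `φp - φm` that is positive before
`m` and negative after it. -/
lemma arcs_false (hα : 0 < α) (hαβ : α < β) (P : Arc α β c φp up vp wp)
    (M : Arc α β c φm um vm wm)
    (hep : ∀ y ∈ Icc α β, 0 < e * wp y) (hem : ∀ y ∈ Icc α β, 0 < e * wm y)
    (h0 : wp α = wm α) (h1 : wp β = wm β) (hv0 : vp α = vm α) (hv1 : vp β = vm β)
    {m : ℝ} (hm : m ∈ Icc α β)
    (hl : ∀ y ∈ Ioo α m, y ≠ c → φm y < φp y) (hr : ∀ y ∈ Ioo m β, y ≠ c → φp y < φm y) :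
    False := by
  have hα' : α ∈ Icc α β := ⟨le_rfl, hαβ.le⟩
  have hβ' : β ∈ Icc α β := ⟨hαβ.le, le_rfl⟩
  have e0 : up α = um α := by linarith [P.diff α hα', M.diff α hα']
  have e1 : up β = um β := by linarith [P.diff β hβ', M.diff β hβ']
  have hlog := log_compare hα hαβ P M hep hem h0 h1 hm hl hr
  have key : ∀ y ∈ Ioo α β, |wm y| * up y < |wp y| * um y := by
    intro y hy
    have hy' := Ioo_subset_Icc_self hy
    have h2 := hlog y hy
    rw [← Real.log_abs (wp y), ← Real.log_abs (wm y)] at h2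
    have a1 := abs_pos.2 (P.wne y hy')
    have a2 := abs_pos.2 (M.wne y hy')
    have a3 := P.upos hy'
    have a4 := M.upos hy'
    rw [← Real.log_lt_log_iff (by positivity) (by positivity), Real.log_mul a2.ne' a3.ne',
      Real.log_mul a1.ne' a4.ne']
    linarith
  rcases lt_trichotomy e 0 with he | he | he
  · refine ratio_compare hα hαβ M P e0.symm e1.symm hv0.symm hv1.symm fun y hy => ?_
    have hy' := Ioo_subset_Icc_self hy
    have h2 := key y hy
    rw [abs_of_neg (neg_of_mul_pos_right (hep y hy') he.le),
      abs_of_neg (neg_of_mul_pos_right (hem y hy') he.le)] at h2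
    have hu : up y = y + wp y := by linarith [P.diff y hy']
    have hu' : um y = y + wm y := by linarith [M.diff y hy']
    rw [hu, hu'] at h2
    have : y * wp y < y * wm y := by linarith
    exact lt_of_mul_lt_mul_left this (hα.trans hy.1).le
  · have := hep α hα'; simp [he] at this
  · refine ratio_compare hα hαβ P M e0 e1 hv0 hv1 fun y hy => ?_
    have hy' := Ioo_subset_Icc_self hy
    have h2 := key y hy
    rw [abs_of_pos (pos_of_mul_pos_right (hep y hy') he.le),
      abs_of_pos (pos_of_mul_pos_right (hem y hy') he.le)] at h2
    have hu : up y = y + wp y := by linarith [P.diff y hy']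
    have hu' : um y = y + wm y := by linarith [M.diff y hy']
    rw [hu, hu'] at h2
    have : y * wm y < y * wp y := by linarith
    exact lt_of_mul_lt_mul_left this (hα.trans hy.1).le

end compare

/-! ### The loop and its two branches -/

/-- The function `f` does not take weakly alternating signs at any four points of `(0, 1)` other
than `c`. The factor `e ≠ 0` covers both sign patterns at once. -/
def NoAlt (c : ℝ) (f : ℝ → ℝ) : Prop :=
  ∀ e t₁ t₂ t₃ t₄ : ℝ, e ≠ 0 → 0 < t₁ → t₁ < t₂ → t₂ < t₃ → t₃ < t₄ → t₄ < 1 →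
    t₁ ≠ c → t₂ ≠ c → t₃ ≠ c → t₄ ≠ c →
    0 ≤ e * f t₁ → e * f t₂ ≤ 0 → 0 ≤ e * f t₃ → e * f t₄ ≤ 0 → False

/-- If `Φ` never passes, even weakly, from nonpositive to nonnegative values, then it is positive
before some point and negative after it. -/
lemma exists_split {α β c : ℝ} (hαβ : α ≤ β) (Φ : ℝ → ℝ)
    (h : ∀ a b, α < a → a < b → b < β → a ≠ c → b ≠ c → Φ a ≤ 0 → 0 ≤ Φ b → False) :
    ∃ m ∈ Icc α β, (∀ y ∈ Ioo α m, y ≠ c → 0 < Φ y) ∧ ∀ y ∈ Ioo m β, y ≠ c → Φ y < 0 := by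
  set E : Set ℝ := insert α {y | y ∈ Ioo α β ∧ y ≠ c ∧ 0 ≤ Φ y} with hE
  have hsub : ∀ y ∈ E, y ≤ β := by
    rintro y (rfl | hy)
    · exact hαβ
    · exact hy.1.2.le
  have hbd : BddAbove E := ⟨β, hsub⟩
  have hα : α ∈ E := mem_insert _ _
  refine ⟨sSup E, ⟨le_csSup hbd hα, csSup_le ⟨α, hα⟩ hsub⟩, fun y hy hyc => ?_,
    fun y hy hyc => ?_⟩
  · obtain ⟨z, hz, hyz⟩ := exists_lt_of_lt_csSup ⟨α, hα⟩ hy.2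
    rcases hz with rfl | hz
    · exact absurd hy.1 hyz.not_gt
    · by_contra! h0
      exact h y z hy.1 hyz hz.1.2 hyc hz.2.1 h0 hz.2.2
  · by_contra! h0
    exact absurd (le_csSup hbd (mem_insert_of_mem _
      ⟨⟨(le_csSup hbd hα).trans_lt hy.1, hy.2⟩, hyc, h0⟩)) (not_le.2 hy.1)

lemma exists_between_ne {a b : ℝ} (c : ℝ) (h : a < b) : ∃ z, a < z ∧ z < b ∧ z ≠ c := by
  by_cases hc : (a + b) / 2 = c
  · exact ⟨(3 * a + b) / 4, by linarith, by linarith, by intro h'; linarith⟩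
  · exact ⟨(a + b) / 2, by linarith, by linarith, hc⟩

/-- If `Φ` has no three weakly alternating values, then it is, up to its sign `d`, positive before
some point and negative after it. -/
lemma exists_split_of_triple {α β c : ℝ} (hαβ : α ≤ β) (Φ : ℝ → ℝ)
    (h : ∀ d y₁ y₂ y₃, d ≠ 0 → α < y₁ → y₁ < y₂ → y₂ < y₃ → y₃ < β → y₁ ≠ c → y₂ ≠ c → y₃ ≠ c →
      0 ≤ d * Φ y₁ → d * Φ y₂ ≤ 0 → 0 ≤ d * Φ y₃ → False) :
    ∃ d : ℝ, (d = 1 ∨ d = -1) ∧ ∃ m ∈ Icc α β, (∀ y ∈ Ioo α m, y ≠ c → 0 < d * Φ y) ∧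
      ∀ y ∈ Ioo m β, y ≠ c → d * Φ y < 0 := by
  by_cases h1 : ∀ a b, α < a → a < b → b < β → a ≠ c → b ≠ c → Φ a ≤ 0 → 0 ≤ Φ b → False
  · refine ⟨1, Or.inl rfl, ?_⟩
    simpa only [one_mul] using exists_split hαβ Φ h1
  by_cases h2 : ∀ a b, α < a → a < b → b < β → a ≠ c → b ≠ c → 0 ≤ Φ a → Φ b ≤ 0 → False
  · refine ⟨-1, Or.inr rfl, ?_⟩
    refine exists_split hαβ (fun y => -1 * Φ y) fun a b l1 l2 l3 ha hb e1 e2 => ?_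
    exact h2 a b l1 l2 l3 ha hb (by linarith) (by linarith)
  exfalso
  have hP : ∀ y₁ y₂ y₃, α < y₁ → y₁ < y₂ → y₂ < y₃ → y₃ < β → y₁ ≠ c → y₂ ≠ c → y₃ ≠ c →
      0 ≤ Φ y₁ → Φ y₂ ≤ 0 → 0 ≤ Φ y₃ → False := fun y₁ y₂ y₃ l1 l2 l3 l4 c1 c2 c3 e1 e2 e3 =>
    h 1 y₁ y₂ y₃ one_ne_zero l1 l2 l3 l4 c1 c2 c3 (by linarith) (by linarith) (by linarith)
  have hN : ∀ y₁ y₂ y₃, α < y₁ → y₁ < y₂ → y₂ < y₃ → y₃ < β → y₁ ≠ c → y₂ ≠ c → y₃ ≠ c →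
      Φ y₁ ≤ 0 → 0 ≤ Φ y₂ → Φ y₃ ≤ 0 → False := fun y₁ y₂ y₃ l1 l2 l3 l4 c1 c2 c3 e1 e2 e3 =>
    h (-1) y₁ y₂ y₃ (by norm_num) l1 l2 l3 l4 c1 c2 c3 (by linarith) (by linarith) (by linarith)
  push Not at h1 h2
  obtain ⟨a, b, l1, l2, l3, ac, bc, ha, hb, -⟩ := h1
  obtain ⟨a', b', l1', l2', l3', ac', bc', ha', hb', -⟩ := h2
  rcases lt_trichotomy a' a with g | rfl | g
  · exact hP a' a b l1' g l2 l3 ac' ac bc ha' ha hb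
  · rcases lt_trichotomy b b' with g | rfl | g
    · exact hN a' b b' l1 l2 g l3' ac bc bc' ha hb hb'
    · obtain ⟨z, z1, z2, zc⟩ := exists_between_ne c l2
      rcases le_total 0 (Φ z) with hz | hz
      · exact hN _ z _ l1 z1 z2 l3 ac zc bc ha hz hb'
      · exact hP _ z _ l1 z1 z2 l3 ac zc bc ha' hz hb
    · exact hP a' b' b l1 l2' g l3 ac bc' bc ha' hb' hb
  · exact hN a a' b' l1 g l2' l3' ac ac' bc' ha ha' hb'

/-- Three closed solutions of the equation `f' = -(A / f + B)` on `[0, 1]`, satisfied by `f = 1 / x`,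
ordered as `w < v < u` with `v > 0` and `w` of the sign of `e`; the equation may fail at the time
`c`. The last two fields are the sign conditions on the coefficients. -/
structure Loop (A B u v w : ℝ → ℝ) (c e : ℝ) : Prop where
  cu : ContinuousOn u (Icc 0 1)
  cv : ContinuousOn v (Icc 0 1)
  cw : ContinuousOn w (Icc 0 1)
  vu : ∀ t ∈ Icc (0:ℝ) 1, v t < u t
  wv : ∀ t ∈ Icc (0:ℝ) 1, w t < v t
  vpos : ∀ t ∈ Icc (0:ℝ) 1, 0 < v t
  wsign : ∀ t ∈ Icc (0:ℝ) 1, 0 < e * w t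
  du : ∀ t ∈ Ioo (0:ℝ) 1, t ≠ c → HasDerivAt u (-(A t / u t + B t)) t
  dv : ∀ t ∈ Ioo (0:ℝ) 1, t ≠ c → HasDerivAt v (-(A t / v t + B t)) t
  dw : ∀ t ∈ Ioo (0:ℝ) 1, t ≠ c → HasDerivAt w (-(A t / w t + B t)) t
  eu : u 0 = u 1
  ev : v 0 = v 1
  ew : w 0 = w 1
  noA : NoAlt c A
  noAB : ∀ k, NoAlt c (fun t => k * A t + B t)

namespace Loop

variable {A B u v w : ℝ → ℝ} {c e : ℝ}

lemma upos (h : Loop A B u v w c e) {t : ℝ} (ht : t ∈ Icc (0:ℝ) 1) : 0 < u t :=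
  (h.vpos t ht).trans (h.vu t ht)

lemma wne (h : Loop A B u v w c e) {t : ℝ} (ht : t ∈ Icc (0:ℝ) 1) : w t ≠ 0 := fun h0 => by
  have := h.wsign t ht; simp [h0] at this

lemma hasDerivAt_gap (h : Loop A B u v w c e) {t : ℝ} (ht : t ∈ Ioo (0:ℝ) 1) (hc : t ≠ c) :
    HasDerivAt (fun t => u t - w t) (A t * ((u t - w t) / (u t * w t))) t := by
  have ht' := Ioo_subset_Icc_self ht
  have h1 := (h.upos ht').ne'
  have h2 := h.wne ht'
  refine ((h.du t ht hc).sub (h.dw t ht hc)).congr_deriv ?_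
  field_simp
  ring

/-- The derivative of the gap `u - w` has the sign of `e * A`. -/
lemma gap_factor (h : Loop A B u v w c e) {t : ℝ} (ht : t ∈ Icc (0:ℝ) 1) :
    ∃ r, 0 < r ∧ A t * ((u t - w t) / (u t * w t)) = e * A t * r := by
  have h1 := h.upos ht
  have h2 := h.wsign t ht
  have h3 := h.wne ht
  have h4 : e ≠ 0 := by rintro rfl; simp at h2
  refine ⟨(u t - w t) / (u t * (e * w t)), div_pos ?_ (mul_pos h1 h2), ?_⟩
  · linarith [h.vu t ht, h.wv t ht]
  · field_simp

/-- A branch of the inverse of the gap turns a loop into an arc. -/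
lemma arc_of_branch (h : Loop A B u v w c e) {α β : ℝ} {τ : ℝ → ℝ}
    (hτc : ContinuousOn τ (Icc α β)) (hτ : ∀ y ∈ Icc α β, τ y ∈ Icc (0:ℝ) 1)
    (hτo : ∀ y ∈ Ioo α β, τ y ∈ Ioo (0:ℝ) 1) (hδ : ∀ y ∈ Icc α β, u (τ y) - w (τ y) = y)
    (hA : ∀ y ∈ Ioo α β, τ y ≠ c → A (τ y) ≠ 0)
    (hd : ∀ y ∈ Ioo α β, τ y ≠ c → HasDerivAt τ
      (A (τ y) * ((u (τ y) - w (τ y)) / (u (τ y) * w (τ y))))⁻¹ y) :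
    Arc α β (u c - w c) (fun y => -B (τ y) / A (τ y)) (fun y => u (τ y)) (fun y => v (τ y))
      (fun y => w (τ y)) := by
  have hne : ∀ y ∈ Ioo α β, y ≠ u c - w c → τ y ≠ c := fun y hy hyc e => by
    have := hδ y (Ioo_subset_Icc_self hy)
    rw [e] at this; exact hyc this.symm
  have der : ∀ {f : ℝ → ℝ}, (∀ t ∈ Icc (0:ℝ) 1, f t ≠ 0) →
      (∀ t ∈ Ioo (0:ℝ) 1, t ≠ c → HasDerivAt f (-(A t / f t + B t)) t) →
      ∀ y ∈ Ioo α β, y ≠ u c - w c → HasDerivAt (fun y => f (τ y))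
        ((-B (τ y) / A (τ y) - 1 / f (τ y)) * (u (τ y) * w (τ y)) / y) y := by
    intro f hf hfd y hy hyc
    have hy' := Ioo_subset_Icc_self hy
    have hn := hne y hy hyc
    refine ((hfd (τ y) (hτo y hy) hn).comp y (hd y hy hn)).congr_deriv ?_
    have a0 := hf _ (hτ y hy')
    have a1 := hA y hy hn
    have a2 := (h.upos (hτ y hy')).ne'
    have a3 := h.wne (hτ y hy')
    have a4 : y ≠ 0 := by
      rw [← hδ y hy']
      exact (by linarith [h.vu _ (hτ y hy'), h.wv _ (hτ y hy')] : 0 < u (τ y) - w (τ y)).ne'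
    rw [hδ y hy']
    field_simp
    ring
  exact
  { cu := h.cu.comp hτc hτ
    cv := h.cv.comp hτc hτ
    cw := h.cw.comp hτc hτ
    diff := hδ
    vu := fun y hy => h.vu _ (hτ y hy)
    wv := fun y hy => h.wv _ (hτ y hy)
    vpos := fun y hy => h.vpos _ (hτ y hy)
    wne := fun y hy => h.wne (hτ y hy)
    du := der (fun t ht => (h.upos ht).ne') h.du
    dv := der (fun t ht => (h.vpos t ht).ne') h.dv
    dw := der (fun t ht => h.wne ht) h.dw }

/-- The difference of `-B / A` between the rising branch (points `rᵢ`) and the falling branch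
(points `lᵢ`) has no three weakly alternating values. With `k` the value of `-B / A` at `l₂`, such
values would give four weakly alternating values of `k * A + B`. -/
lemma no_triple (h : Loop A B u v w c e) {d l₁ l₂ l₃ r₁ r₂ r₃ : ℝ} (hd : d ≠ 0)
    (h0 : 0 < l₃) (h32 : l₃ < l₂) (h21 : l₂ < l₁) (hlr : l₁ < r₁) (h12 : r₁ < r₂) (h23 : r₂ < r₃)
    (h1 : r₃ < 1) (cl₁ : l₁ ≠ c) (cl₂ : l₂ ≠ c) (cl₃ : l₃ ≠ c) (cr₁ : r₁ ≠ c) (cr₂ : r₂ ≠ c)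
    (cr₃ : r₃ ≠ c) (Al₁ : e * A l₁ < 0) (Al₂ : e * A l₂ < 0) (Al₃ : e * A l₃ < 0)
    (Ar₁ : 0 < e * A r₁) (Ar₂ : 0 < e * A r₂) (Ar₃ : 0 < e * A r₃)
    (p₁ : 0 ≤ d * (-B r₁ / A r₁ - -B l₁ / A l₁)) (p₂ : d * (-B r₂ / A r₂ - -B l₂ / A l₂) ≤ 0)
    (p₃ : 0 ≤ d * (-B r₃ / A r₃ - -B l₃ / A l₃)) : False := by
  have he : e ≠ 0 := by rintro rfl; simp at Al₁
  set k := -B l₂ / A l₂ with hk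
  -- Since `k A + B = A (k - φ)` with `φ = -B / A`, signs of `k A + B` are read off from `k - φ`.
  have val : ∀ t, e * A t ≠ 0 → d * e * (k * A t + B t) = e * A t * (d * k - d * (-B t / A t)) := by
    intro t ht
    have : A t ≠ 0 := right_ne_zero_of_mul ht
    field_simp
    ring
  have val' : ∀ t, e * A t ≠ 0 →
      -(d * e) * (k * A t + B t) = -(e * A t * (d * k - d * (-B t / A t))) := by
    intro t ht
    rw [← val t ht]; ring
  have hde : d * e ≠ 0 := mul_ne_zero hd he
  have hz : d * e * (k * A l₂ + B l₂) = 0 := by rw [val _ Al₂.ne]; simp [hk]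
  have hz' : -(d * e) * (k * A l₂ + B l₂) = 0 := by linarith
  have vr₂ : 0 ≤ d * e * (k * A r₂ + B r₂) := by
    rw [val _ Ar₂.ne']; exact mul_nonneg Ar₂.le (by linarith)
  have vr₂' : -(d * e) * (k * A r₂ + B r₂) ≤ 0 := by linarith
  rcases le_or_gt (d * k) (d * (-B l₁ / A l₁)) with g | g
  · refine h.noAB k (-(d * e)) l₂ l₁ r₁ r₂ (neg_ne_zero.2 hde) (h0.trans h32) h21 hlr h12
      (h23.trans h1) cl₂ cl₁ cr₁ cr₂ hz'.ge ?_ ?_ vr₂'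
    · rw [val' _ Al₁.ne]
      have := mul_nonneg_of_nonpos_of_nonpos Al₁.le (sub_nonpos.2 g); linarith
    · rw [val' _ Ar₁.ne']
      have := mul_nonneg Ar₁.le (by linarith : 0 ≤ d * (-B r₁ / A r₁) - d * k); linarith
  have vl₁ : d * e * (k * A l₁ + B l₁) ≤ 0 := by
    rw [val _ Al₁.ne]
    exact mul_nonpos_of_nonpos_of_nonneg Al₁.le (by linarith)
  rcases le_or_gt (d * k) (d * (-B l₃ / A l₃)) with g' | g'
  · refine h.noAB k (d * e) l₃ l₁ r₂ r₃ hde h0 (h32.trans h21) (hlr.trans h12) h23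
      h1 cl₃ cl₁ cr₂ cr₃ ?_ vl₁ vr₂ ?_
    · rw [val _ Al₃.ne]
      exact mul_nonneg_of_nonpos_of_nonpos Al₃.le (sub_nonpos.2 g')
    · rw [val _ Ar₃.ne']
      exact mul_nonpos_of_nonneg_of_nonpos Ar₃.le (by linarith)
  · refine h.noAB k (-(d * e)) l₃ l₂ l₁ r₂ (neg_ne_zero.2 hde) h0 h32 h21 (hlr.trans h12)
      (h23.trans h1) cl₃ cl₂ cl₁ cr₂ ?_ hz'.le ?_ vr₂'
    · rw [val' _ Al₃.ne]
      have := mul_nonpos_of_nonpos_of_nonneg Al₃.le (by linarith : 0 ≤ d * k - d * (-B l₃ / A l₃))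
      linarith
    · linarith

/-- There is no loop whose gap decreases on `[0, s]` and increases on `[s, 1]`. -/
theorem false_of_split (h : Loop A B u v w c e) {s : ℝ} (hs : s ∈ Ioo (0:ℝ) 1)
    (hl : ∀ t ∈ Ioo 0 s, t ≠ c → e * A t < 0) (hr : ∀ t ∈ Ioo s 1, t ≠ c → 0 < e * A t) :
    False := by
  set δ : ℝ → ℝ := fun t => u t - w t with hδ
  have cδ : ContinuousOn δ (Icc 0 1) := h.cu.sub h.cw
  set δ' : ℝ → ℝ := fun t => A t * ((u t - w t) / (u t * w t)) with hδ'
  have dδ : ∀ t ∈ Ioo (0:ℝ) 1, t ≠ c → HasDerivAt δ (δ' t) t := fun t ht hc =>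
    h.hasDerivAt_gap ht hc
  have sl : ∀ t ∈ Ioo 0 s, t ≠ c → δ' t < 0 := by
    intro t ht hc
    obtain ⟨r, r0, e1⟩ := h.gap_factor ⟨ht.1.le, (ht.2.trans hs.2).le⟩
    rw [hδ']; beta_reduce; rw [e1]; exact mul_neg_of_neg_of_pos (hl t ht hc) r0
  have sr : ∀ t ∈ Ioo s 1, t ≠ c → 0 < δ' t := by
    intro t ht hc
    obtain ⟨r, r0, e1⟩ := h.gap_factor ⟨(hs.1.trans ht.1).le, ht.2.le⟩
    rw [hδ']; beta_reduce; rw [e1]; exact mul_pos (hr t ht hc) r0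
  -- `q` inverts the gap on `[s, 1]`.
  obtain ⟨q, cq, mq, iq, jq, oq, dq⟩ := exists_inverse (D := δ) (D' := δ') c hs.2
    (cδ.mono (Icc_subset_Icc hs.1.le le_rfl))
    fun t ht hc => ⟨sr t ht hc, dδ t ⟨hs.1.trans ht.1, ht.2⟩ hc⟩
  -- Time is reversed on the decreasing branch, so that `-p` inverts the gap on `[0, s]`.
  obtain ⟨p, cp, mp, ip, jp, op, dp⟩ := exists_inverse (D := fun t => δ (-t))
    (D' := fun t => -δ' (-t)) (-c) (neg_lt_zero.2 hs.1)
    (cδ.comp continuousOn_neg fun t ht => ⟨by linarith [ht.2], by linarith [ht.1, hs.2]⟩)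
    fun t ht hc => by
      have h1 : -t ≠ c := fun h => hc (by rw [← h, neg_neg])
      have h2 : -t ∈ Ioo 0 s := ⟨by linarith [ht.2], by linarith [ht.1]⟩
      refine ⟨by linarith [sl _ h2 h1], ?_⟩
      have := (dδ (-t) ⟨h2.1, h2.2.trans hs.2⟩ h1).comp t (hasDerivAt_neg t)
      exact this.congr_deriv (by ring)
  have eδ : δ 0 = δ 1 := by simp only [hδ, h.eu, h.ew]
  simp only [neg_neg, neg_zero, eδ] at cp mp ip jp op dp
  set α := δ s with hα
  set β := δ 1 with hβ
  have hαβ : α < β := by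
    refine lt_of_deriv_pos_off c hs.2 (cδ.mono (Icc_subset_Icc hs.1.le le_rfl)) fun t ht hc => ?_
    exact ⟨_, sr t ht hc, dδ t ⟨hs.1.trans ht.1, ht.2⟩ hc⟩
  have hs' : s ∈ Icc (0:ℝ) 1 := ⟨hs.1.le, hs.2.le⟩
  have α0 : 0 < α := by simp only [hα, hδ]; linarith [h.vu s hs', h.wv s hs']
  have hα' : α ∈ Icc α β := ⟨le_rfl, hαβ.le⟩
  have hβ' : β ∈ Icc α β := ⟨hαβ.le, le_rfl⟩
  have op' : ∀ y ∈ Ioo α β, -p y ∈ Ioo 0 s := fun y hy =>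
    ⟨by linarith [(op y hy).2], by linarith [(op y hy).1]⟩
  have jp' : ∀ y ∈ Icc α β, -p y ∈ Icc (0:ℝ) 1 := fun y hy =>
    ⟨by linarith [(jp y hy).1.2], by linarith [(jp y hy).1.1, hs.2]⟩
  have jq' : ∀ y ∈ Icc α β, q y ∈ Icc (0:ℝ) 1 := fun y hy =>
    ⟨hs.1.le.trans (jq y hy).1.1, (jq y hy).1.2⟩
  have P := h.arc_of_branch cq jq' (fun y hy => ⟨hs.1.trans (oq y hy).1, (oq y hy).2⟩)
    (fun y hy => (jq y hy).2)
    (fun y hy hc h0 => by have := hr _ (oq y hy) hc; simp [h0] at this) dq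
  have M := h.arc_of_branch (τ := fun y => -p y) cp.neg jp'
    (fun y hy => ⟨(op' y hy).1, (op' y hy).2.trans hs.2⟩)
    (fun y hy => (jp y hy).2)
    (fun y hy hc h0 => by have := hl _ (op' y hy) hc; simp [h0] at this)
    (fun y hy hc => by
      have := (dp y hy fun h => hc (by rw [h, neg_neg])).neg
      refine this.congr_deriv ?_
      rw [inv_neg, neg_neg])
  have nep : ∀ y ∈ Ioo α β, y ≠ u c - w c → -p y ≠ c := fun y hy hyc e => by
    have := (jp y (Ioo_subset_Icc_self hy)).2
    rw [e] at this; exact hyc this.symm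
  have neq : ∀ y ∈ Ioo α β, y ≠ u c - w c → q y ≠ c := fun y hy hyc e => by
    have := (jq y (Ioo_subset_Icc_self hy)).2
    rw [e] at this; exact hyc this.symm
  have qα : q α = s := iq s ⟨le_rfl, hs.2.le⟩
  have qβ : q β = 1 := iq 1 ⟨hs.2.le, le_rfl⟩
  have pα : -p α = s := by
    have := ip (-s) ⟨le_rfl, by linarith [hs.1]⟩
    rw [neg_neg] at this; rw [this, neg_neg]
  have pβ : -p β = 0 := by
    have := ip 0 ⟨by linarith [hs.1], le_rfl⟩
    rw [neg_zero, eδ] at this; rw [this, neg_zero]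
  have hep : ∀ y ∈ Icc α β, 0 < e * w (q y) := fun y hy => h.wsign _ (jq' y hy)
  have hem : ∀ y ∈ Icc α β, 0 < e * w (-p y) := fun y hy => h.wsign _ (jp' y hy)
  have w0 : w (q α) = w (-p α) := by rw [qα, pα]
  have w1 : w (q β) = w (-p β) := by rw [qβ, pβ, h.ew]
  have v0 : v (q α) = v (-p α) := by rw [qα, pα]
  have v1 : v (q β) = v (-p β) := by rw [qβ, pβ, h.ev]
  obtain ⟨d, hd, m, hm, ml, mr⟩ := exists_split_of_triple (c := u c - w c) hαβ.le
    (fun y => -B (q y) / A (q y) - -B (-p y) / A (-p y))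
    (fun d y₁ y₂ y₃ hd l1 l2 l3 l4 c1 c2 c3 p1 p2 p3 => by
      have m1 : y₁ ∈ Ioo α β := ⟨l1, by linarith⟩
      have m2 : y₂ ∈ Ioo α β := ⟨by linarith, by linarith⟩
      have m3 : y₃ ∈ Ioo α β := ⟨by linarith, by linarith⟩
      have n1 := Ioo_subset_Icc_self m1
      have n2 := Ioo_subset_Icc_self m2
      have n3 := Ioo_subset_Icc_self m3
      exact h.no_triple hd (op' _ m3).1 (neg_lt_neg (mp n2 n3 l3)) (neg_lt_neg (mp n1 n2 l2))
        ((op' _ m1).2.trans (oq _ m1).1) (mq n1 n2 l2) (mq n2 n3 l3) (oq _ m3).2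
        (nep _ m1 c1) (nep _ m2 c2) (nep _ m3 c3) (neq _ m1 c1) (neq _ m2 c2) (neq _ m3 c3)
        (hl _ (op' _ m1) (nep _ m1 c1)) (hl _ (op' _ m2) (nep _ m2 c2))
        (hl _ (op' _ m3) (nep _ m3 c3)) (hr _ (oq _ m1) (neq _ m1 c1))
        (hr _ (oq _ m2) (neq _ m2 c2)) (hr _ (oq _ m3) (neq _ m3 c3)) p1 p2 p3)
  rcases hd with rfl | rfl
  · exact arcs_false α0 hαβ P M hep hem w0 w1 v0 v1 hm
      (fun y hy hc => by linarith [ml y hy hc]) (fun y hy hc => by linarith [mr y hy hc])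
  · exact arcs_false α0 hαβ M P hem hep w0.symm w1.symm v0.symm v1.symm hm
      (fun y hy hc => by linarith [ml y hy hc]) (fun y hy hc => by linarith [mr y hy hc])

end Loop

/-! ### Rotation of the time circle -/

/-- The function `f` on `[0, 1)`, seen as a circle, rotated by `r`. -/
def rot (r : ℝ) (f : ℝ → ℝ) : ℝ → ℝ := fun t => f (Int.fract (t + r))

lemma fract_left {r t : ℝ} (hr : 0 < r) (h0 : 0 ≤ t) (h : t < 1 - r) :
    Int.fract (t + r) = t + r :=
  Int.fract_eq_self.2 ⟨by linarith, by linarith⟩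

lemma fract_right {r t : ℝ} (hr : r < 1) (h1 : t ≤ 1) (h : 1 - r ≤ t) :
    Int.fract (t + r) = t + (r - 1) := by
  rw [Int.fract_eq_iff]
  exact ⟨by linarith, by linarith, 1, by push_cast; ring⟩

lemma continuous_rot {r : ℝ} {f : ℝ → ℝ} (hf : ContinuousOn f (Icc 0 1)) (h01 : f 0 = f 1) :
    Continuous (rot r f) :=
  (hf.comp_fract'' h01).comp (continuous_id.add continuous_const)

lemma hasDerivAt_rot {r : ℝ} (hr : r ∈ Ioo (0:ℝ) 1) {f f' : ℝ → ℝ}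
    (hf : ∀ t ∈ Ioo (0:ℝ) 1, t ≠ 0 → HasDerivAt f (f' t) t) :
    ∀ t ∈ Ioo (0:ℝ) 1, t ≠ 1 - r → HasDerivAt (rot r f) (rot r f' t) t := by
  intro t ht htc
  rcases lt_or_gt_of_ne htc with h | h
  · have e : rot r f =ᶠ[nhds t] fun z => f (z + r) := by
      filter_upwards [Ioo_mem_nhds ht.1 h] with z hz
      simp only [rot, fract_left hr.1 hz.1.le hz.2]
    simp only [rot, fract_left hr.1 ht.1.le h]
    exact ((hf (t + r) ⟨by linarith [ht.1, hr.1], by linarith⟩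
      (by linarith [ht.1, hr.1])).comp_add_const t r).congr_of_eventuallyEq e
  · have e : rot r f =ᶠ[nhds t] fun z => f (z + (r - 1)) := by
      filter_upwards [Ioo_mem_nhds h ht.2] with z hz
      simp only [rot, fract_right hr.2 hz.2.le hz.1.le]
    simp only [rot, fract_right hr.2 ht.2.le h.le]
    exact ((hf (t + (r - 1)) ⟨by linarith, by linarith [ht.2, hr.2]⟩
      (by linarith)).comp_add_const t (r - 1)).congr_of_eventuallyEq e

/-- Cyclic invariance of `NoAlt`, in a form that also allows the point `0`, which is rotated to `r`.
A rotation permutes the four points cyclically, which preserves weak alternation up to a sign. -/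
lemma NoAlt.rot_aux {r : ℝ} (hr : r ∈ Ioo (0:ℝ) 1) {f : ℝ → ℝ} (hf : NoAlt 0 f)
    {e t₁ t₂ t₃ t₄ : ℝ} (he : e ≠ 0) (h0 : 0 ≤ t₁) (h12 : t₁ < t₂) (h23 : t₂ < t₃) (h34 : t₃ < t₄)
    (h1 : t₄ < 1) (c₁ : t₁ ≠ 1 - r) (c₂ : t₂ ≠ 1 - r) (c₃ : t₃ ≠ 1 - r) (c₄ : t₄ ≠ 1 - r)
    (s₁ : 0 ≤ e * rot r f t₁) (s₂ : e * rot r f t₂ ≤ 0) (s₃ : 0 ≤ e * rot r f t₃)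
    (s₄ : e * rot r f t₄ ≤ 0) : False := by
  obtain ⟨r0, r1⟩ := hr
  have L : ∀ t, 0 ≤ t → t < 1 - r → rot r f t = f (t + r) := fun t a b => by
    simp only [rot, fract_left r0 a b]
  have R : ∀ t, t < 1 → 1 - r < t → rot r f t = f (t + (r - 1)) := fun t a b => by
    simp only [rot, fract_right r1 a.le b.le]
  have hf' : ∀ e t₁ t₂ t₃ t₄ : ℝ, e ≠ 0 → 0 < t₁ → t₁ < t₂ → t₂ < t₃ → t₃ < t₄ → t₄ < 1 →
      0 ≤ e * f t₁ → e * f t₂ ≤ 0 → 0 ≤ e * f t₃ → e * f t₄ ≤ 0 → False :=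
    fun e t₁ t₂ t₃ t₄ he a b c d g => hf e t₁ t₂ t₃ t₄ he a b c d g
      (by linarith) (by linarith) (by linarith) (by linarith)
  rcases lt_or_gt_of_ne c₄ with g₄ | g₄
  · rw [L _ (by linarith) (by linarith)] at s₁ s₂ s₃ s₄
    exact hf' e _ _ _ _ he (by linarith) (by linarith) (by linarith) (by linarith) (by linarith)
      s₁ s₂ s₃ s₄
  rw [R _ (by linarith) (by linarith)] at s₄
  rcases lt_or_gt_of_ne c₃ with g₃ | g₃
  · rw [L _ (by linarith) (by linarith)] at s₁ s₂ s₃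
    exact hf' (-e) _ _ _ _ (neg_ne_zero.2 he) (by linarith : 0 < t₄ + (r - 1))
      (by linarith : _ < t₁ + r) (by linarith : _ < t₂ + r)
      (by linarith : _ < t₃ + r) (by linarith) (by linarith) (by linarith) (by linarith)
      (by linarith)
  rw [R _ (by linarith) (by linarith)] at s₃
  rcases lt_or_gt_of_ne c₂ with g₂ | g₂
  · rw [L _ (by linarith) (by linarith)] at s₁ s₂
    exact hf' e _ _ _ _ he (by linarith : 0 < t₃ + (r - 1)) (by linarith : _ < t₄ + (r - 1))
      (by linarith : _ < t₁ + r) (by linarith : _ < t₂ + r) (by linarith) s₃ s₄ s₁ s₂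
  rw [R _ (by linarith) (by linarith)] at s₂
  rcases lt_or_gt_of_ne c₁ with g₁ | g₁
  · rw [L _ (by linarith) (by linarith)] at s₁
    exact hf' (-e) _ _ _ _ (neg_ne_zero.2 he) (by linarith : 0 < t₂ + (r - 1))
      (by linarith : _ < t₃ + (r - 1)) (by linarith : _ < t₄ + (r - 1))
      (by linarith : _ < t₁ + r) (by linarith) (by linarith) (by linarith) (by linarith)
      (by linarith)
  rw [R _ (by linarith) (by linarith)] at s₁
  exact hf' e _ _ _ _ he (by linarith : 0 < t₁ + (r - 1)) (by linarith) (by linarith)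
      (by linarith) (by linarith) s₁ s₂ s₃ s₄

lemma NoAlt.rot {r : ℝ} (hr : r ∈ Ioo (0:ℝ) 1) {f : ℝ → ℝ} (hf : NoAlt 0 f) :
    NoAlt (1 - r) (rot r f) :=
  fun _ _ _ _ _ he h0 h12 h23 h34 h1 c₁ c₂ c₃ c₄ s₁ s₂ s₃ s₄ =>
    hf.rot_aux hr he h0.le h12 h23 h34 h1 c₁ c₂ c₃ c₄ s₁ s₂ s₃ s₄

namespace Loop

variable {A B u v w : ℝ → ℝ} {c e : ℝ}

lemma rotate (h : Loop A B u v w 0 e) {r : ℝ} (hr : r ∈ Ioo (0:ℝ) 1) :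
    Loop (rot r A) (rot r B) (rot r u) (rot r v) (rot r w) (1 - r) e := by
  have mem : ∀ t : ℝ, Int.fract (t + r) ∈ Icc (0:ℝ) 1 := fun t =>
    ⟨Int.fract_nonneg _, (Int.fract_lt_one _).le⟩
  have per : ∀ f : ℝ → ℝ, rot r f 0 = rot r f 1 := fun f => by
    simp [rot]
  exact
  { cu := (continuous_rot h.cu h.eu).continuousOn
    cv := (continuous_rot h.cv h.ev).continuousOn
    cw := (continuous_rot h.cw h.ew).continuousOn
    vu := fun t _ => h.vu _ (mem t)
    wv := fun t _ => h.wv _ (mem t)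
    vpos := fun t _ => h.vpos _ (mem t)
    wsign := fun t _ => h.wsign _ (mem t)
    du := hasDerivAt_rot hr h.du
    dv := hasDerivAt_rot hr h.dv
    dw := hasDerivAt_rot hr h.dw
    eu := per u
    ev := per v
    ew := per w
    noA := h.noA.rot hr
    noAB := fun k => (h.noAB k).rot hr }

/-- The gap is closed, so its derivative takes both signs: otherwise it is constant and `A`
vanishes. -/
lemma exists_sign (h : Loop A B u v w 0 e) {ε : ℝ} (hε : ε ≠ 0) :
    ∃ p ∈ Ioo (0:ℝ) 1, 0 < ε * (e * A p) := by
  by_contra! hcon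
  have cδ : ContinuousOn (fun t => ε * (u t - w t)) (Icc 0 1) :=
    continuousOn_const.mul (h.cu.sub h.cw)
  have dδ : ∀ t ∈ Ioo (0:ℝ) 1, HasDerivAt (fun t => ε * (u t - w t))
      (ε * (A t * ((u t - w t) / (u t * w t)))) t :=
    fun t ht => (h.hasDerivAt_gap ht ht.1.ne').const_mul ε
  have anti : AntitoneOn (fun t => ε * (u t - w t)) (Icc 0 1) := by
    refine antitoneOn_of_deriv_nonpos (convex_Icc 0 1) cδ ?_ ?_
    · intro t ht
      rw [interior_Icc] at ht
      exact (dδ t ht).differentiableAt.differentiableWithinAt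
    · intro t ht
      rw [interior_Icc] at ht
      rw [(dδ t ht).deriv]
      obtain ⟨r, r0, e1⟩ := h.gap_factor (Ioo_subset_Icc_self ht)
      rw [e1]
      have := mul_nonpos_of_nonpos_of_nonneg (hcon t ht) r0.le
      linarith
  have const : ∀ t ∈ Icc (0:ℝ) 1, ε * (u t - w t) = ε * (u 0 - w 0) := by
    intro t ht
    have h1 := anti ⟨le_rfl, zero_le_one⟩ ht ht.1
    have h2 := anti ht ⟨zero_le_one, le_rfl⟩ ht.2
    simp only [← h.eu, ← h.ew] at h1 h2
    exact le_antisymm h1 h2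
  have zero : ∀ t ∈ Ioo (0:ℝ) 1, A t = 0 := by
    intro t ht
    have ht' := Ioo_subset_Icc_self ht
    have h1 : HasDerivAt (fun t => ε * (u t - w t)) 0 t := by
      refine (hasDerivAt_const t (ε * (u 0 - w 0))).congr_of_eventuallyEq ?_
      filter_upwards [Ioo_mem_nhds ht.1 ht.2] with z hz
      exact const z (Ioo_subset_Icc_self hz)
    have h2 := (dδ t ht).unique h1
    have h3 : (u t - w t) / (u t * w t) ≠ 0 :=
      div_ne_zero (by linarith [h.vu t ht', h.wv t ht'])
        (mul_ne_zero (h.upos ht').ne' (h.wne ht'))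
    simpa [hε, h3] using h2
  have z := fun t ht => zero t ht
  exact h.noA 1 (1/5) (2/5) (3/5) (4/5) one_ne_zero (by norm_num) (by norm_num) (by norm_num)
    (by norm_num) (by norm_num) (by norm_num) (by norm_num) (by norm_num) (by norm_num)
    (by rw [zero _ ⟨by norm_num, by norm_num⟩]; simp)
    (by rw [zero _ ⟨by norm_num, by norm_num⟩]; simp)
    (by rw [zero _ ⟨by norm_num, by norm_num⟩]; simp)
    (by rw [zero _ ⟨by norm_num, by norm_num⟩]; simp)

/-- A loop on which `e * A` never passes from nonnegative to nonpositive values is impossible. -/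
lemma false_of_no_descent (h : Loop A B u v w c e)
    (hno : ∀ a b, 0 < a → a < b → b < 1 → a ≠ c → b ≠ c → 0 ≤ e * A a → e * A b ≤ 0 → False)
    (hp : ∃ p ∈ Ioo (0:ℝ) 1, p ≠ c ∧ 0 < e * A p) (hn : ∃ n ∈ Ioo (0:ℝ) 1, n ≠ c ∧ e * A n < 0) :
    False := by
  obtain ⟨s, hs, hl, hr⟩ := exists_split (c := c) (zero_le_one (α := ℝ)) (fun t => -(e * A t))
    fun a b l1 l2 l3 ca cb ha hb => hno a b l1 l2 l3 ca cb (by linarith) (by linarith)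
  obtain ⟨p, hp, pc, p0⟩ := hp
  obtain ⟨n, hn, nc, n0⟩ := hn
  refine h.false_of_split (s := s) ⟨lt_of_le_of_ne hs.1 ?_, lt_of_le_of_ne hs.2 ?_⟩
    (fun t ht hc => by linarith [hl t ht hc]) (fun t ht hc => by linarith [hr t ht hc])
  · rintro rfl
    linarith [hr n hn nc]
  · rintro rfl
    linarith [hl p hp pc]

/-- No loop exists: rotating by a suitable sign change of `e * A` leads to the situation of
`false_of_no_descent`. -/
theorem false (h : Loop A B u v w 0 e) (hA : Continuous A) : False := by
  obtain ⟨p₀, hp₀, hp₀'⟩ := h.exists_sign one_ne_zero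
  obtain ⟨n₀, hn₀, hn₀'⟩ := h.exists_sign (ε := -1) (by norm_num)
  have he : e ≠ 0 := by rintro rfl; simp at hp₀'
  have noA : ∀ e t₁ t₂ t₃ t₄ : ℝ, e ≠ 0 → 0 < t₁ → t₁ < t₂ → t₂ < t₃ → t₃ < t₄ → t₄ < 1 →
      0 ≤ e * A t₁ → e * A t₂ ≤ 0 → 0 ≤ e * A t₃ → e * A t₄ ≤ 0 → False :=
    fun e t₁ t₂ t₃ t₄ he a b c d g => h.noA e t₁ t₂ t₃ t₄ he a b c d g
      (by linarith) (by linarith) (by linarith) (by linarith)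
  by_cases H : ∃ p n, 0 < p ∧ p < n ∧ n < 1 ∧ 0 < e * A p ∧ e * A n < 0
  · obtain ⟨p, n, p0, pn, n1, sp, sn⟩ := H
    have cσ : Continuous fun t => e * A t := continuous_const.mul hA
    have hcomp : IsCompact (Icc p n ∩ (fun t => e * A t) ⁻¹' Ici 0) :=
      isCompact_Icc.inter_right (isClosed_Ici.preimage cσ)
    -- `r` is the last time in `[p, n]` at which `e * A` is nonnegative.
    obtain ⟨r, ⟨hr, sr⟩, hmax⟩ := hcomp.exists_isGreatest ⟨p, ⟨le_rfl, pn.le⟩, sp.le⟩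
    have sr : 0 ≤ e * A r := sr
    have neg : ∀ t, r < t → t ≤ n → e * A t < 0 := by
      intro t h1 h2
      by_contra! h3
      exact absurd (hmax ⟨⟨hr.1.trans h1.le, h2⟩, h3⟩) (not_le.2 h1)
    have rn : r < n := lt_of_le_of_ne hr.2 (by rintro rfl; linarith)
    have sr' : e * A r ≤ 0 := by
      refine le_of_tendsto (cσ.continuousWithinAt (s := Ioi r) (x := r)) ?_
      filter_upwards [Ioc_mem_nhdsGT rn] with t ht using (neg t ht.1 ht.2).le
    have pr : p < r := lt_of_le_of_ne hr.1 (by rintro rfl; linarith)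
    have hr01 : r ∈ Ioo (0:ℝ) 1 := ⟨p0.trans pr, rn.trans n1⟩
    have L : ∀ t, 0 ≤ t → t < 1 - r → rot r A t = A (t + r) := fun t a b => by
      simp only [rot, fract_left hr01.1 a b]
    have small : ∀ t, 0 < t → t < n - r → e * rot r A t < 0 := fun t a b => by
      rw [L t a.le (by linarith)]; exact neg _ (by linarith) (by linarith)
    refine (h.rotate hr01).false_of_no_descent ?_ ?_ ?_
    · intro a b a0 ab b1 ac bc sa sb
      have m1 : 0 < min a (n - r) := lt_min a0 (by linarith)
      have m2 : min a (n - r) / 2 < a := by linarith [min_le_left a (n - r)]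
      have m3 : min a (n - r) / 2 < n - r := by linarith [min_le_right a (n - r)]
      refine h.noA.rot_aux hr01 he le_rfl (by linarith : 0 < min a (n - r) / 2) m2 ab b1
        (by linarith [hr01.2]) (by linarith) ac bc ?_ (small _ (by linarith) m3).le sa sb
      rw [L 0 le_rfl (by linarith [hr01.2]), zero_add]
      exact sr
    · refine ⟨p + 1 - r, ⟨by linarith [hr01.2], by linarith⟩, by linarith, ?_⟩
      have : rot r A (p + 1 - r) = A p := by
        simp only [rot]
        rw [fract_right hr01.2 (by linarith) (by linarith)]
        ring_nf
      rwa [this]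
    · exact ⟨(n - r) / 2, ⟨by linarith, by linarith [hr01.1]⟩, by linarith,
        small _ (by linarith) (by linarith)⟩
  · push Not at H
    have np : n₀ < p₀ := by
      rcases lt_trichotomy n₀ p₀ with g | g | g
      · exact g
      · subst g; linarith
      · linarith [H p₀ n₀ hp₀.1 g hn₀.2 (by linarith)]
    refine h.false_of_no_descent ?_ ⟨p₀, hp₀, hp₀.1.ne', by linarith⟩
      ⟨n₀, hn₀, hn₀.1.ne', by linarith⟩
    intro a b a0 ab b1 _ _ sa sb
    rcases lt_trichotomy a n₀ with g | g | g
    · have s1 : e * A (a / 2) ≤ 0 := by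
        by_contra! h1
        linarith [H (a / 2) n₀ (by linarith) (by linarith) hn₀.2 h1]
      exact noA (-e) (a / 2) a n₀ p₀ (neg_ne_zero.2 he) (by linarith) (by linarith) g np hp₀.2
        (by linarith) (by linarith) (by linarith) (by linarith)
    · subst g; linarith
    rcases lt_trichotomy b p₀ with g' | g' | g'
    · exact noA (-e) n₀ a b p₀ (neg_ne_zero.2 he) hn₀.1 g ab g' hp₀.2
        (by linarith) (by linarith) (by linarith) (by linarith)
    · subst g'; linarith
    · have s1 : 0 ≤ e * A ((b + 1) / 2) :=
        H p₀ ((b + 1) / 2) hp₀.1 (by linarith) (by linarith) (by linarith)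
      exact noA (-e) n₀ p₀ b ((b + 1) / 2) (neg_ne_zero.2 he) hn₀.1 np g' (by linarith)
        (by linarith) (by linarith) (by linarith) (by linarith) (by linarith)

end Loop

/-! ### Closed solutions of the Abel equation -/

lemma exists_primitive {f : ℝ → ℝ} {a b : ℝ} (hab : a ≤ b) (hf : ContinuousOn f (Icc a b)) :
    ∃ F : ℝ → ℝ, ∀ t ∈ Icc a b, HasDerivAt F (f t) t := by
  have hg : Continuous (IccExtend hab ((Icc a b).domRestrict f)) :=
    (continuousOn_iff_continuous_domRestrict.1 hf).Icc_extend'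
  refine ⟨fun t => ∫ s in a..t, IccExtend hab ((Icc a b).domRestrict f) s, fun t ht => ?_⟩
  have := hg.integral_hasStrictDerivAt a t
  rw [IccExtend_of_mem hab _ ht] at this
  exact this.hasDerivAt

/-- A solution of `y' = h(t) y` is a positive multiple of its initial value at every time. -/
lemma linear_ode {h y : ℝ → ℝ} (hh : ContinuousOn h (Icc 0 1))
    (hy : ∀ t ∈ Icc (0:ℝ) 1, HasDerivWithinAt y (h t * y t) (Icc 0 1) t) :
    ∀ t ∈ Icc (0:ℝ) 1, ∃ k, 0 < k ∧ y t = k * y 0 := by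
  obtain ⟨H, hH⟩ := exists_primitive zero_le_one hh
  have hz : ∀ t ∈ Icc (0:ℝ) 1,
      HasDerivWithinAt (fun t => y t * Real.exp (-H t)) 0 (Icc 0 1) t := by
    intro t ht
    refine ((hy t ht).mul (hH t ht).neg.exp.hasDerivWithinAt).congr_deriv ?_
    simp only [Pi.neg_apply]
    ring
  have hc := constant_of_derivWithin_zero (fun t ht => (hz t ht).differentiableWithinAt)
    fun t ht => (hz t (Ico_subset_Icc_self ht)).derivWithin
      (uniqueDiffOn_Icc zero_lt_one t (Ico_subset_Icc_self ht))
  intro t ht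
  refine ⟨Real.exp (-H 0) * Real.exp (H t), by positivity, ?_⟩
  have h1 := hc t ht
  have h2 : Real.exp (-H t) * Real.exp (H t) = 1 := by rw [← Real.exp_add]; simp
  calc y t = y t * (Real.exp (-H t) * Real.exp (H t)) := by rw [h2, mul_one]
    _ = (y t * Real.exp (-H t)) * Real.exp (H t) := by ring
    _ = _ := by rw [h1]; ring

section sols

variable {A B x y z : ℝ → ℝ}

lemma AbelSol.continuousOn (hx : AbelSol A B 1 x) : ContinuousOn x (Icc 0 1) :=
  fun t ht => (hx t ht).continuousWithinAt

lemma AbelSol.sign (hA : Continuous A) (hB : Continuous B) (hx : AbelSol A B 1 x) :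
    ∀ t ∈ Icc (0:ℝ) 1, ∃ k, 0 < k ∧ x t = k * x 0 := by
  have hc := hx.continuousOn
  refine linear_ode (h := fun t => A t * x t ^ 2 + B t * x t)
    ((hA.continuousOn.mul (hc.pow 2)).add (hB.continuousOn.mul hc)) fun t ht => ?_
  exact (hx t ht).congr_deriv (by ring)

lemma AbelSol.ne_zero (hA : Continuous A) (hB : Continuous B) (hx : AbelSol A B 1 x)
    (h0 : x 0 ≠ 0) : ∀ t ∈ Icc (0:ℝ) 1, x t ≠ 0 := fun t ht => by
  obtain ⟨k, k0, e⟩ := hx.sign hA hB t ht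
  rw [e]; exact mul_ne_zero k0.ne' h0

lemma AbelSol.inv_deriv (hA : Continuous A) (hB : Continuous B) (hx : AbelSol A B 1 x)
    (h0 : x 0 ≠ 0) : ∀ t ∈ Icc (0:ℝ) 1,
      HasDerivWithinAt (fun t => (x t)⁻¹) (-(A t / (x t)⁻¹ + B t)) (Icc 0 1) t := by
  intro t ht
  have := hx.ne_zero hA hB h0 t ht
  refine ((hx t ht).inv this).congr_deriv ?_
  field_simp

/-- The order of the reciprocals of two solutions persists, because their difference solves a linear
equation with coefficient `A x y`. -/
lemma AbelSol.inv_lt (hA : Continuous A) (hB : Continuous B) (hx : AbelSol A B 1 x)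
    (hy : AbelSol A B 1 y) (hx0 : x 0 ≠ 0) (hy0 : y 0 ≠ 0) (h : (y 0)⁻¹ < (x 0)⁻¹) :
    ∀ t ∈ Icc (0:ℝ) 1, (y t)⁻¹ < (x t)⁻¹ := by
  intro t ht
  obtain ⟨k, k0, e⟩ := linear_ode (h := fun t => A t * (x t * y t))
    (y := fun t => (x t)⁻¹ - (y t)⁻¹)
    (hA.continuousOn.mul (hx.continuousOn.mul hy.continuousOn)) (fun t ht => by
      have h1 := hx.ne_zero hA hB hx0 t ht
      have h2 := hy.ne_zero hA hB hy0 t ht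
      refine ((hx.inv_deriv hA hB hx0 t ht).sub (hy.inv_deriv hA hB hy0 t ht)).congr_deriv ?_
      field_simp
      ring) t ht
  have := mul_pos k0 (sub_pos.2 h)
  linarith

/-- Three closed solutions with sorted reciprocals, the middle one positive, form a `Loop`. -/
lemma three_sorted_pos (hA : Continuous A) (hB : Continuous B) (noA : NoAlt 0 A)
    (noAB : ∀ k, NoAlt 0 (fun t => k * A t + B t))
    (hx : ClosedSol A B 1 x) (hy : ClosedSol A B 1 y) (hz : ClosedSol A B 1 z)
    (hx0 : x 0 ≠ 0) (hy0 : y 0 ≠ 0) (hz0 : z 0 ≠ 0)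
    (hyx : (y 0)⁻¹ < (x 0)⁻¹) (hzy : (z 0)⁻¹ < (y 0)⁻¹) (hpos : 0 < y 0) : False := by
  have cont : ∀ {x : ℝ → ℝ}, ClosedSol A B 1 x → x 0 ≠ 0 →
      ContinuousOn (fun t => (x t)⁻¹) (Icc 0 1) := fun hx hx0 =>
    hx.1.continuousOn.inv₀ (hx.1.ne_zero hA hB hx0)
  have der : ∀ {x : ℝ → ℝ}, ClosedSol A B 1 x → x 0 ≠ 0 → ∀ t ∈ Ioo (0:ℝ) 1, t ≠ 0 →
      HasDerivAt (fun t => (x t)⁻¹) (-(A t / (x t)⁻¹ + B t)) t := fun hx hx0 t ht _ =>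
    (hx.1.inv_deriv hA hB hx0 t (Ioo_subset_Icc_self ht)).hasDerivAt (Icc_mem_nhds ht.1 ht.2)
  have loop : Loop A B (fun t => (x t)⁻¹) (fun t => (y t)⁻¹) (fun t => (z t)⁻¹) 0 (z 0) :=
  { cu := cont hx hx0
    cv := cont hy hy0
    cw := cont hz hz0
    vu := hx.1.inv_lt hA hB hy.1 hx0 hy0 hyx
    wv := hy.1.inv_lt hA hB hz.1 hy0 hz0 hzy
    vpos := fun t ht => by
      obtain ⟨k, k0, e⟩ := hy.1.sign hA hB t ht
      rw [e]; positivity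
    wsign := fun t ht => by
      obtain ⟨k, k0, e⟩ := hz.1.sign hA hB t ht
      have : z 0 * (k * z 0)⁻¹ = k⁻¹ := by field_simp
      rw [e, this]; positivity
    du := der hx hx0
    dv := der hy hy0
    dw := der hz hz0
    eu := by simp only [hx.2]
    ev := by simp only [hy.2]
    ew := by simp only [hz.2]
    noA := noA
    noAB := noAB }
  exact loop.false hA

lemma ClosedSol.neg (hx : ClosedSol A B 1 x) :
    ClosedSol A (fun t => -B t) 1 (fun t => -x t) :=
  ⟨fun t ht => ((hx.1 t ht).neg).congr_deriv (by ring), by simp only [hx.2]⟩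

lemma NoAlt.neg {c : ℝ} {f : ℝ → ℝ} (hf : NoAlt c f) : NoAlt c (fun t => -f t) :=
  fun e t₁ t₂ t₃ t₄ he a b c d g c₁ c₂ c₃ c₄ s₁ s₂ s₃ s₄ =>
    hf (-e) t₁ t₂ t₃ t₄ (neg_ne_zero.2 he) a b c d g c₁ c₂ c₃ c₄
      (by linarith) (by linarith) (by linarith) (by linarith)

/-- The sign condition of `three_sorted_pos` is removed by the reflection `x ↦ -x`, `B ↦ -B`. -/
lemma three_sorted (hA : Continuous A) (hB : Continuous B) (noA : NoAlt 0 A)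
    (noAB : ∀ k, NoAlt 0 (fun t => k * A t + B t))
    (hx : ClosedSol A B 1 x) (hy : ClosedSol A B 1 y) (hz : ClosedSol A B 1 z)
    (hx0 : x 0 ≠ 0) (hy0 : y 0 ≠ 0) (hz0 : z 0 ≠ 0)
    (hyx : (y 0)⁻¹ < (x 0)⁻¹) (hzy : (z 0)⁻¹ < (y 0)⁻¹) : False := by
  rcases lt_or_gt_of_ne hy0 with h | h
  · refine three_sorted_pos hA hB.neg noA (fun k => ?_) hz.neg hy.neg hx.neg
      (neg_ne_zero.2 hz0) (neg_ne_zero.2 hy0) (neg_ne_zero.2 hx0) ?_ ?_ (neg_pos.2 h)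
    · convert (noAB (-k)).neg using 2 with t
      simp only [Pi.neg_apply]
      ring
    · rw [inv_neg, inv_neg]; exact neg_lt_neg hzy
    · rw [inv_neg, inv_neg]; exact neg_lt_neg hyx
  · exact three_sorted_pos hA hB noA noAB hx hy hz hx0 hy0 hz0 hyx hzy h

lemma no_three (hA : Continuous A) (hB : Continuous B) (noA : NoAlt 0 A)
    (noAB : ∀ k, NoAlt 0 (fun t => k * A t + B t))
    (hx : ClosedSol A B 1 x) (hy : ClosedSol A B 1 y) (hz : ClosedSol A B 1 z)
    (hx0 : x 0 ≠ 0) (hy0 : y 0 ≠ 0) (hz0 : z 0 ≠ 0)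
    (hxy : x 0 ≠ y 0) (hxz : x 0 ≠ z 0) (hyz : y 0 ≠ z 0) : False := by
  have S := @three_sorted A B
  rcases lt_or_gt_of_ne (inv_injective.ne hxy) with a | a <;>
  rcases lt_or_gt_of_ne (inv_injective.ne hxz) with b | b <;>
  rcases lt_or_gt_of_ne (inv_injective.ne hyz) with c | c
  · exact S hA hB noA noAB hz hy hx hz0 hy0 hx0 c a
  · exact S hA hB noA noAB hy hz hx hy0 hz0 hx0 c b
  · linarith
  · exact S hA hB noA noAB hy hx hz hy0 hx0 hz0 a b
  · exact S hA hB noA noAB hz hx hy hz0 hx0 hy0 b a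
  · linarith
  · exact S hA hB noA noAB hx hz hy hx0 hz0 hy0 b c
  · exact S hA hB noA noAB hx hy hz hx0 hy0 hz0 a c

end sols

/-! ### Sign changes of trinomials -/

/-- Positivity of a generalized Vandermonde determinant: the strict convexity of `s ↦ s ^ (q / p)`
at the points `r ^ p < s ^ p < t ^ p`. -/
lemma vandermonde_pos {p q : ℕ} (hp : 0 < p) (hpq : p < q) {r s t : ℝ} (hr : 0 < r) (hrs : r < s)
    (hst : s < t) :
    0 < (t ^ p - s ^ p) * r ^ q - (t ^ p - r ^ p) * s ^ q + (s ^ p - r ^ p) * t ^ q := by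
  have hp' : (0:ℝ) < p := by exact_mod_cast hp
  have hs := hr.trans hrs
  have e : ∀ x : ℝ, 0 < x → (x ^ p) ^ ((q:ℝ) / p) = x ^ q := fun x hx => by
    rw [← Real.rpow_natCast x p, ← Real.rpow_mul hx.le, mul_div_cancel₀ _ hp'.ne',
      Real.rpow_natCast]
  have h1 : r ^ p < s ^ p := pow_lt_pow_left₀ hrs hr.le hp.ne'
  have h2 : s ^ p < t ^ p := pow_lt_pow_left₀ hst hs.le hp.ne'
  have hone : 1 < (q:ℝ) / p := by rw [one_lt_div hp']; exact_mod_cast hpq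
  have := (strictConvexOn_rpow hone).slope_strict_mono_adjacent
    (pow_nonneg hr.le p : r ^ p ∈ Ici (0:ℝ)) (pow_nonneg (hs.trans hst).le p : t ^ p ∈ Ici (0:ℝ))
    h1 h2
  simp only [e r hr, e s hs, e t (hs.trans hst)] at this
  rw [div_lt_div_iff₀ (sub_pos.2 h1) (sub_pos.2 h2)] at this
  linarith

/-- A nonzero trinomial has no four weakly alternating values on `(0, 1)`. Eliminating the two lower
coefficients from the values at the first three and at the last three of the four points determines
the sign of the leading coefficient in two opposite ways. -/
lemma noAlt_trinomial {m₀ m₁ m₂ : ℕ} (h01 : m₀ < m₁) (h12 : m₁ < m₂) {a₀ a₁ a₂ : ℝ}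
    (h : ¬(a₀ = 0 ∧ a₁ = 0 ∧ a₂ = 0)) :
    NoAlt 0 (fun t => a₀ * t ^ m₀ + a₁ * t ^ m₁ + a₂ * t ^ m₂) := by
  obtain ⟨p, rfl⟩ := Nat.exists_eq_add_of_lt h01
  obtain ⟨q, rfl⟩ := Nat.exists_eq_add_of_lt h12
  intro e t₁ t₂ t₃ t₄ he l0 l1 l2 l3 _ _ _ _ _ s₁ s₂ s₃ s₄
  set P := p + 1 with hP
  set Q := p + 1 + (q + 1) with hQ
  set g : ℝ → ℝ := fun t => a₀ + a₁ * t ^ P + a₂ * t ^ Q with hg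
  have fac : ∀ t : ℝ, e * (a₀ * t ^ m₀ + a₁ * t ^ (m₀ + p + 1) + a₂ * t ^ (m₀ + p + 1 + q + 1)) =
      t ^ m₀ * (e * g t) := by
    intro t
    simp only [hg, hP, hQ]
    ring
  have l2' := l0.trans l1
  have l3' := l2'.trans l2
  have l4' := l3'.trans l3
  simp only [fac] at s₁ s₂ s₃ s₄
  replace s₁ := nonneg_of_mul_nonneg_right s₁ (pow_pos l0 m₀)
  replace s₂ := nonpos_of_mul_nonpos_right s₂ (pow_pos l2' m₀)
  replace s₃ := nonneg_of_mul_nonneg_right s₃ (pow_pos l3' m₀)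
  replace s₄ := nonpos_of_mul_nonpos_right s₄ (pow_pos l4' m₀)
  have hP0 : 0 < P := Nat.succ_pos p
  have hPQ : P < Q := by omega
  have d1 : 0 < t₂ ^ P - t₁ ^ P := sub_pos.2 (pow_lt_pow_left₀ l1 l0.le hP0.ne')
  have d2 : 0 < t₃ ^ P - t₂ ^ P := sub_pos.2 (pow_lt_pow_left₀ l2 l2'.le hP0.ne')
  have d3 : 0 < t₄ ^ P - t₃ ^ P := sub_pos.2 (pow_lt_pow_left₀ l3 l3'.le hP0.ne')
  have v1 := vandermonde_pos hP0 hPQ l0 l1 l2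
  have v2 := vandermonde_pos hP0 hPQ l2' l2 l3
  have id1 : (t₃ ^ P - t₂ ^ P) * (e * g t₁) - (t₃ ^ P - t₁ ^ P) * (e * g t₂) +
      (t₂ ^ P - t₁ ^ P) * (e * g t₃) = e * a₂ * ((t₃ ^ P - t₂ ^ P) * t₁ ^ Q -
      (t₃ ^ P - t₁ ^ P) * t₂ ^ Q + (t₂ ^ P - t₁ ^ P) * t₃ ^ Q) := by
    simp only [hg]; ring
  have id2 : (t₄ ^ P - t₃ ^ P) * (e * g t₂) - (t₄ ^ P - t₂ ^ P) * (e * g t₃) +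
      (t₃ ^ P - t₂ ^ P) * (e * g t₄) = e * a₂ * ((t₄ ^ P - t₃ ^ P) * t₂ ^ Q -
      (t₄ ^ P - t₂ ^ P) * t₃ ^ Q + (t₃ ^ P - t₂ ^ P) * t₄ ^ Q) := by
    simp only [hg]; ring
  have w1 := mul_nonneg d2.le s₁
  have w2 := mul_nonpos_of_nonneg_of_nonpos (by linarith : 0 ≤ t₃ ^ P - t₁ ^ P) s₂
  have w3 := mul_nonneg d1.le s₃
  have x1 := mul_nonpos_of_nonneg_of_nonpos d3.le s₂
  have x2 := mul_nonneg (by linarith : 0 ≤ t₄ ^ P - t₂ ^ P) s₃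
  have x3 := mul_nonpos_of_nonneg_of_nonpos d2.le s₄
  have ge : 0 ≤ e * a₂ := nonneg_of_mul_nonneg_left (by rw [← id1]; linarith) v1
  have le : e * a₂ ≤ 0 := nonpos_of_mul_nonpos_left (by rw [← id2]; linarith) v2
  have ea : e * a₂ = 0 := le_antisymm le ge
  have a2 : a₂ = 0 := by simpa [he] using ea
  rw [ea, zero_mul] at id1
  have z1 : (t₃ ^ P - t₂ ^ P) * (e * g t₁) = 0 := by linarith
  have z2 : (t₃ ^ P - t₁ ^ P) * (e * g t₂) = 0 := by linarith
  have g1 : g t₁ = 0 := by simpa [he, d2.ne'] using z1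
  have g2 : g t₂ = 0 := by
    have : t₃ ^ P - t₁ ^ P ≠ 0 := by linarith
    simpa [he, this] using z2
  simp only [hg, a2, zero_mul, add_zero] at g1 g2
  have a1 : a₁ = 0 := by
    have : a₁ * (t₂ ^ P - t₁ ^ P) = 0 := by linarith
    simpa [d1.ne'] using this
  exact h ⟨by simpa [a1] using g1, a1, a2⟩

/-! ### Dependent coefficients and the count -/

/-- When the equation separates as `x' = C(t) V(x)`, a closed solution along which `V > 0` has other
closed solutions arbitrarily near it. -/
lemma exists_nearby_pos {C x : ℝ → ℝ} {a b : ℝ} (hC : Continuous C)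
    (hx : ClosedSol (fun t => a * C t) (fun t => b * C t) 1 x)
    (hV : 0 < a * x 0 ^ 3 + b * x 0 ^ 2) {ε : ℝ} (hε : 0 < ε) :
    ∃ y, ClosedSol (fun t => a * C t) (fun t => b * C t) 1 y ∧ |y 0 - x 0| < ε ∧ y 0 ≠ x 0 := by
  set V : ℝ → ℝ := fun s => a * s ^ 3 + b * s ^ 2 with hVdef
  have cV : Continuous V := by fun_prop
  have cx := hx.1.continuousOn
  have dx : ∀ t ∈ Icc (0:ℝ) 1, HasDerivWithinAt x (C t * V (x t)) (Icc 0 1) t := fun t ht =>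
    (hx.1 t ht).congr_deriv (by simp only [hVdef]; ring)
  have posV : ∀ t ∈ Icc (0:ℝ) 1, 0 < V (x t) := by
    intro t ht
    obtain ⟨k, k0, e⟩ := linear_ode (h := fun t => C t * (3 * a * x t ^ 2 + 2 * b * x t))
      (y := fun t => V (x t))
      (hC.continuousOn.mul ((continuousOn_const.mul (cx.pow 2)).add (continuousOn_const.mul cx)))
      (fun t ht => by
        refine ((((dx t ht).pow 3).const_mul a).add (((dx t ht).pow 2).const_mul b)).congr_deriv ?_
        push_cast
        ring) t ht
    rw [e]; exact mul_pos k0 hV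
  -- The range of `x` is `[x i, x j]`; `V` remains positive on a slightly larger interval `[l, r]`.
  obtain ⟨i, hi, imin⟩ := isCompact_Icc.exists_isMinOn (nonempty_Icc.2 zero_le_one) cx
  obtain ⟨j, hj, jmax⟩ := isCompact_Icc.exists_isMaxOn (nonempty_Icc.2 zero_le_one) cx
  have rng : ∀ s ∈ Icc (x i) (x j), 0 < V s := by
    intro s hs
    have : s ∈ x '' uIcc i j := by
      refine intermediate_value_uIcc (cx.mono (uIcc_subset_Icc hi hj)) ?_
      rwa [uIcc_of_le (hs.1.trans hs.2)]
    obtain ⟨t, ht, rfl⟩ := this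
    exact posV t (uIcc_subset_Icc hi hj ht)
  have hij : x i ≤ x j := imin hj
  have op : IsOpen {s | 0 < V s} := isOpen_lt continuous_const cV
  obtain ⟨η₁, η₁0, b₁⟩ := Metric.isOpen_iff.1 op (x i) (rng _ ⟨le_rfl, hij⟩)
  obtain ⟨η₂, η₂0, b₂⟩ := Metric.isOpen_iff.1 op (x j) (rng _ ⟨hij, le_rfl⟩)
  set l := x i - η₁ / 2 with hl
  set r := x j + η₂ / 2 with hr
  have hlr : l < r := by linarith
  have pos : ∀ s ∈ Icc l r, 0 < V s := by
    intro s hs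
    rcases lt_or_ge s (x i) with h1 | h1
    · refine b₁ ?_
      rw [Metric.mem_ball, Real.dist_eq, abs_lt]
      exact ⟨by linarith [hs.1], by linarith⟩
    rcases lt_or_ge (x j) s with h2 | h2
    · refine b₂ ?_
      rw [Metric.mem_ball, Real.dist_eq, abs_lt]
      exact ⟨by linarith, by linarith [hs.2]⟩
    · exact rng s ⟨h1, h2⟩
  obtain ⟨G, hG⟩ := exists_primitive hlr.le
    (cV.continuousOn.inv₀ (s := Icc l r) fun s hs => (pos s hs).ne')
  have cG : ContinuousOn G (Icc l r) := fun s hs => (hG s hs).continuousAt.continuousWithinAt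
  obtain ⟨H, cH, mH, iH, jH, oH, dH⟩ := exists_inverse (D := G) (D' := fun s => (V s)⁻¹) l hlr cG
    fun s hs _ => ⟨inv_pos.2 (pos s (Ioo_subset_Icc_self hs)), hG s (Ioo_subset_Icc_self hs)⟩
  have mG : StrictMonoOn G (Icc l r) := fun s hs t ht hst =>
    lt_of_deriv_pos hst (cG.mono (Icc_subset_Icc hs.1 ht.2)) fun z hz =>
      have hz' : z ∈ Icc l r := ⟨hs.1.trans hz.1.le, hz.2.le.trans ht.2⟩
      ⟨_, inv_pos.2 (pos z hz'), hG z hz'⟩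
  have lm : l ∈ Icc l r := ⟨le_rfl, hlr.le⟩
  have rm : r ∈ Icc l r := ⟨hlr.le, le_rfl⟩
  have xm : ∀ t ∈ Icc (0:ℝ) 1, x t ∈ Ioo l r := fun t ht =>
    ⟨by have : x i ≤ x t := imin ht
        linarith, by have : x t ≤ x j := jmax ht
                     linarith⟩
  have xm' : ∀ t ∈ Icc (0:ℝ) 1, x t ∈ Icc l r := fun t ht => Ioo_subset_Icc_self (xm t ht)
  have hjr : G (x j) < G r := mG (xm' j hj) rm (xm j hj).2
  have h0 : (0:ℝ) ∈ Icc (0:ℝ) 1 := ⟨le_rfl, zero_le_one⟩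
  have dH' : ∀ s ∈ Ioo (G l) (G r), HasDerivAt H (V (H s)) s := fun s hs =>
    (dH s hs (oH s hs).1.ne').congr_deriv (inv_inv _)
  have gx : ∀ t ∈ Icc (0:ℝ) 1, G (x t) ∈ Ioo (G l) (G r) := fun t ht =>
    ⟨mG lm (xm' t ht) (xm t ht).1, mG (xm' t ht) rm (xm t ht).2⟩
  obtain ⟨d, d0, hd⟩ := Metric.continuousAt_iff.1 (dH' _ (gx 0 h0)).continuousAt ε hε
  set κ := min d (G r - G (x j)) / 2 with hκ
  have κ0 : 0 < κ := by
    have : 0 < min d (G r - G (x j)) := lt_min d0 (by linarith)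
    linarith
  have κd : κ < d := by linarith [min_le_left d (G r - G (x j))]
  have κr : κ < G r - G (x j) := by linarith [min_le_right d (G r - G (x j))]
  have gy : ∀ t ∈ Icc (0:ℝ) 1, G (x t) + κ ∈ Ioo (G l) (G r) := fun t ht =>
    ⟨by linarith [(gx t ht).1], by
      have : G (x t) ≤ G (x j) := mG.monotoneOn (xm' t ht) (xm' j hj) (jmax ht)
      linarith⟩
  have Hx : H (G (x 0)) = x 0 := iH _ (xm' 0 h0)
  refine ⟨fun t => H (G (x t) + κ), ⟨fun t ht => ?_, by simp only [hx.2]⟩, ?_, ?_⟩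
  · have h1 : HasDerivWithinAt (fun t => G (x t) + κ) ((V (x t))⁻¹ * (C t * V (x t))) (Icc 0 1) t :=
      ((hG _ (xm' t ht)).comp_hasDerivWithinAt t (dx t ht)).add_const κ
    have hne := (posV t ht).ne'
    refine ((dH' _ (gy t ht)).comp_hasDerivWithinAt t h1).congr_deriv ?_
    have : (V (x t))⁻¹ * (C t * V (x t)) = C t := by field_simp
    rw [this]
    simp only [hVdef]
    ring
  · have := @hd (G (x 0) + κ) (by
      rw [Real.dist_eq, add_sub_cancel_left, abs_of_pos κ0]; exact κd)
    rw [Real.dist_eq, Hx] at this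
    exact this
  · have := mH (Ioo_subset_Icc_self (gx 0 h0)) (Ioo_subset_Icc_self (gy 0 h0))
      (by linarith : G (x 0) < G (x 0) + κ)
    rw [Hx] at this
    exact this.ne'

lemma LimitCycle.zero_of_dependent {C x : ℝ → ℝ} {a b : ℝ} (hC : Continuous C)
    (hx : LimitCycle (fun t => a * C t) (fun t => b * C t) 1 x) (h0 : x 0 ≠ 0) :
    a * x 0 + b = 0 := by
  obtain ⟨hx, ε, hε, iso⟩ := hx
  by_contra hne
  have hV : a * x 0 ^ 3 + b * x 0 ^ 2 ≠ 0 := by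
    have : a * x 0 ^ 3 + b * x 0 ^ 2 = x 0 ^ 2 * (a * x 0 + b) := by ring
    rw [this]; exact mul_ne_zero (pow_ne_zero 2 h0) hne
  rcases lt_or_gt_of_ne hV with h | h
  · have e1 : (fun t => a * C t) = fun t => (-a) * (-C t) := by funext t; ring
    have e2 : (fun t => b * C t) = fun t => (-b) * (-C t) := by funext t; ring
    rw [e1, e2] at hx iso
    obtain ⟨y, hy, h1, h2⟩ := exists_nearby_pos (C := fun t => -C t) hC.neg hx (by linarith) hε
    exact h2 (iso y hy h1)
  · obtain ⟨y, hy, h1, h2⟩ := exists_nearby_pos hC hx h hε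
    exact h2 (iso y hy h1)

lemma encard_le_three_of {S : Set ℝ}
    (h : ∀ p ∈ S, ∀ q ∈ S, ∀ r ∈ S, p ≠ 0 → q ≠ 0 → r ≠ 0 → p ≠ q → p ≠ r → q ≠ r → False) :
    S.encard ≤ 3 := by
  have h2 : (S \ {0}).encard ≤ 2 := by
    by_contra! hlt
    obtain ⟨T, hT, hc⟩ := Set.exists_subset_encard_eq (k := 3) (by
      have := Order.add_one_le_of_lt hlt
      norm_num at this
      exact this)
    obtain ⟨p, q, r, hpq, hpr, hqr, rfl⟩ := Set.encard_eq_three.1 hc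
    have hp := hT (by simp : p ∈ ({p, q, r} : Set ℝ))
    have hq := hT (by simp : q ∈ ({p, q, r} : Set ℝ))
    have hr := hT (by simp : r ∈ ({p, q, r} : Set ℝ))
    exact h p hp.1 q hq.1 r hr.1 hp.2 hq.2 hr.2 hpq hpr hqr
  calc S.encard ≤ (S \ {0}).encard + ({0} : Set ℝ).encard :=
        Set.encard_le_encard_sdiff_add_encard S {0}
    _ ≤ 2 + 1 := by rw [Set.encard_singleton]; gcongr
    _ = 3 := by norm_num

/-- The Abel equation with trinomial coefficients on `[0,1]` has at most
three limit cycles (including `x = 0` when it is isolated). -/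
theorem abel_trinomial_at_most_three_limit_cycles
    (m₀ m₁ m₂ : ℕ) (h01 : m₀ < m₁) (h12 : m₁ < m₂)
    (a₀ a₁ a₂ b₀ b₁ b₂ : ℝ) :
    Set.encard (LCInits
      (fun t => a₀ * t ^ m₀ + a₁ * t ^ m₁ + a₂ * t ^ m₂)
      (fun t => b₀ * t ^ m₀ + b₁ * t ^ m₁ + b₂ * t ^ m₂)
      1) ≤ 3 := by
  apply encard_le_three_of
  rintro _ ⟨x, hx, rfl⟩ _ ⟨y, hy, rfl⟩ _ ⟨z, hz, rfl⟩ hx0 hy0 hz0 hxy hxz hyz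
  by_cases hA : a₀ = 0 ∧ a₁ = 0 ∧ a₂ = 0
  · obtain ⟨rfl, rfl, rfl⟩ := hA
    set C : ℝ → ℝ := fun t => b₀ * t ^ m₀ + b₁ * t ^ m₁ + b₂ * t ^ m₂ with hC
    have e1 : (fun t : ℝ => 0 * t ^ m₀ + 0 * t ^ m₁ + 0 * t ^ m₂) = fun t => 0 * C t := by
      funext t; ring
    have e2 : C = fun t => 1 * C t := by funext t; ring
    have hx' : LimitCycle (fun t => 0 * C t) (fun t => 1 * C t) 1 x := by
      rw [← e1, ← e2]; exact hx
    have := hx'.zero_of_dependent (by fun_prop) hx0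
    norm_num at this
  by_cases hB : ∃ k, k * a₀ + b₀ = 0 ∧ k * a₁ + b₁ = 0 ∧ k * a₂ + b₂ = 0
  · obtain ⟨k, k0, k1, k2⟩ := hB
    set C : ℝ → ℝ := fun t => a₀ * t ^ m₀ + a₁ * t ^ m₁ + a₂ * t ^ m₂ with hC
    have e1 : C = fun t => 1 * C t := by funext t; ring
    have e2 : (fun t : ℝ => b₀ * t ^ m₀ + b₁ * t ^ m₁ + b₂ * t ^ m₂) = fun t => (-k) * C t := by
      funext t
      simp only [hC]
      linear_combination t ^ m₀ * k0 + t ^ m₁ * k1 + t ^ m₂ * k2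
    have hx' : LimitCycle (fun t => 1 * C t) (fun t => -k * C t) 1 x := by
      rw [← e1, ← e2]; exact hx
    have hy' : LimitCycle (fun t => 1 * C t) (fun t => -k * C t) 1 y := by
      rw [← e1, ← e2]; exact hy
    have h1 := hx'.zero_of_dependent (by fun_prop) hx0
    have h2 := hy'.zero_of_dependent (by fun_prop) hy0
    exact hxy (by linarith)
  refine no_three (by fun_prop) (by fun_prop) (noAlt_trinomial h01 h12 hA) (fun k => ?_)
    hx.1 hy.1 hz.1 hx0 hy0 hz0 hxy hxz hyz
  convert noAlt_trinomial h01 h12 (fun h => hB ⟨k, h⟩) using 2 with t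
  ring
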